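/- There exists δ_0 > 0 such that: for every u_0 ∈ C^1(ℝ;ℝ) such that (u_0 − ū)/Ω_{κ⁺}^+ and (u_0 − ū)'/Ω_{κ⁺}^+ are bounded and uniformly continuous on ℝ, E_{0,κ⁺} := ‖u_0 − ū‖_{W^{1,∞}_{κ⁺,+}} ≤ δ_0, and moreover e^{κ⁺x}·(u_0 − ū)(x) → 0 and e^{κ⁺x}·(u_0 − ū)'(x) → 0 as x → +∞, the unique global classical solution u ∈ C^1([0,∞)×ℝ;ℝ) of ∂_t u + f'(u)·∂_x u = g(u) with u(0,·) = u_0 satisfies ‖u(t, · + σt) − ū‖_{W^{1,∞}_{κ⁺,+}} → 0 as t → +∞. -/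

import Mathlib

/-! In the frame moving with the front the equation reduces to the autonomous system
`x' = f'(y) - σ`, `y' = g(y)` along characteristics.  Write `ub` for the profile; by the profile
equation, `Y' = f'(ub Y) - σ` and `y = ub Y` solve this system.  Hence, as long as a datum
is written `u0 b = ub (η b)`, the characteristic issued from `b` stays at the constant distance
`η b - b` from the point where the front takes the carried value: the phase shift is conserved.

All speeds `f'(ub) - σ` are negative (`front_speed_neg`): the front invades the unstable state `up`
and characteristics come from `+∞` and leave at `-∞`.  The derivatives `ub'`, `ub''` are comparable
to, respectively bounded by, the critical weight `exp (-κ x)` near `+∞` (`frontBounds`), so a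
perturbation of weighted size `N` at `b` is a phase shift of size `O(N)` with slope `1 + O(N)`
(`exists_phase`, `right_region`).  Transporting it gives a perturbation of weighted size `O(N)`
again, at a position further to the left.

Three groups of starting points then cover the solution at a large time `t`.  Points far to the
right carry a small `N` by the assumption at `+∞`, and keep it (`shift_estimate`).  Points in a
fixed bounded interval have reached, by time `t`, a neighbourhood of `-∞`, where the weight is `1`
and `ub`, `ub'` are close to `um`, `0`, so that a bounded phase shift does not matter.  Points to
the left lie in the basin of the stable state `um`; there values contract exponentially while
positions drift relative to each other by a small amount, so that value and slope both relax
(`left_deriv`, `left_region`).  The map from starting point to position is continuous and at bounded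
distance from the identity, so it is onto and these estimates reach every position.
-/

open Filter Set Function

/-- The weighted `W^{1,∞}` norm `‖v‖_{W^{1,∞}_{κ,+}} = sup_x max(|v x|, |v' x|)/Ω_κ^+(x)`,
where `Ω_κ^+(x) = exp(−κ·max(x,0))`. -/
noncomputable def wNorm (κ : ℝ) (v : ℝ → ℝ) : ℝ :=
  ⨆ x : ℝ, max |v x| |deriv v x| / Real.exp (-(κ * max x 0))

/-- Bounded and uniformly continuous real function on `ℝ`. -/
def IsBUC (h : ℝ → ℝ) : Prop :=
  (∃ M, ∀ x, |h x| ≤ M) ∧ UniformContinuous h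

/-- `u : [0,∞) × ℝ → ℝ` is a global classical (`C¹`) solution of
`∂_t u + f'(u) ∂_x u = g(u)` with initial datum `u0`. -/
def IsClassicalSol (f g : ℝ → ℝ) (u0 : ℝ → ℝ) (u : ℝ → ℝ → ℝ) : Prop :=
  ContDiffOn ℝ 1 (uncurry u) (Ici (0:ℝ) ×ˢ (univ : Set ℝ)) ∧
  (∀ x, u 0 x = u0 x) ∧
  ∀ t, 0 ≤ t → ∀ x : ℝ,
    derivWithin (fun s => u s x) (Ici (0:ℝ)) t
      + deriv f (u t x) * deriv (u t) x = g (u t x)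

/-! ### Characteristics of classical solutions -/

/-- `IsChar f g σ t b U₀ X U`: in the frame moving with speed `σ`, the characteristic issued at
time `0` from position `b` with value `U₀` is at position `X` with value `U` at time `t`.  The
trajectory solves the autonomous system `x' = f'(y) - σ`, `y' = g(y)` on `[0,t]`. -/
def IsChar (f g : ℝ → ℝ) (σ t b U0 X U : ℝ) : Prop :=
  ∃ x y : ℝ → ℝ,
    (∀ s ∈ Icc 0 t, HasDerivWithinAt x (deriv f (y s) - σ) (Icc 0 t) s) ∧
    (∀ s ∈ Icc 0 t, HasDerivWithinAt y (g (y s)) (Icc 0 t) s) ∧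
    x 0 = b ∧ y 0 = U0 ∧ x t = X ∧ y t = U

lemma hasDerivWithinAt_Ici_of_Icc {p : ℝ → ℝ} {p' t s : ℝ} (hs : s ∈ Ico 0 t)
    (h : HasDerivWithinAt p p' (Icc 0 t) s) : HasDerivWithinAt p p' (Ici s) s :=
  h.mono_of_mem_nhdsWithin (Icc_mem_nhdsGE_of_mem hs)

lemma contDiff_one_deriv {h : ℝ → ℝ} (hh : ContDiff ℝ 2 h) : ContDiff ℝ 1 (deriv h) := by
  have : ContDiff ℝ (1 + 1) h := by simpa [one_add_one_eq_two] using hh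
  exact (contDiff_succ_iff_deriv.1 this).2.2

lemma exists_lip {h : ℝ → ℝ} (hh : ContDiff ℝ 1 h) (A B : ℝ) :
    ∃ L ≥ (0:ℝ), ∀ a ∈ Icc A B, ∀ b ∈ Icc A B, |h a - h b| ≤ L * |a - b| := by
  obtain ⟨L, hL⟩ := (isCompact_Icc (a := A) (b := B)).exists_bound_of_continuousOn
    (hh.continuous_deriv le_rfl).continuousOn
  refine ⟨max L 0, le_max_right _ _, fun a ha b hb => ?_⟩
  have := (convex_Icc A B).norm_image_sub_le_of_norm_deriv_le (f := h) (C := max L 0)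
    (fun x _ => (hh.differentiable one_ne_zero) x)
    (fun x hx => (hL x hx).trans (le_max_left _ _)) hb ha
  simpa [Real.norm_eq_abs] using this

lemma exists_abs_le_of_continuousOn {p : ℝ → ℝ} {t : ℝ} (hp : ContinuousOn p (Icc 0 t)) :
    ∃ M, ∀ s ∈ Icc 0 t, |p s| ≤ M := by
  obtain ⟨M, hM⟩ := (isCompact_Icc (a := 0) (b := t)).exists_bound_of_continuousOn hp
  exact ⟨M, fun s hs => by simpa using hM s hs⟩

lemma ode_unique {g : ℝ → ℝ} (hg : ContDiff ℝ 1 g) {t : ℝ} {y z : ℝ → ℝ}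
    (hy : ∀ s ∈ Icc 0 t, HasDerivWithinAt y (g (y s)) (Icc 0 t) s)
    (hz : ∀ s ∈ Icc 0 t, HasDerivWithinAt z (g (z s)) (Icc 0 t) s)
    (h0 : y 0 = z 0) : ∀ s ∈ Icc 0 t, y s = z s := by
  have cy : ContinuousOn y (Icc 0 t) := fun s hs => (hy s hs).continuousWithinAt
  have cz : ContinuousOn z (Icc 0 t) := fun s hs => (hz s hs).continuousWithinAt
  obtain ⟨M, hM⟩ := exists_abs_le_of_continuousOn cy
  obtain ⟨N, hN⟩ := exists_abs_le_of_continuousOn cz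
  obtain ⟨L, hL0, hL⟩ := exists_lip hg (-max M N) (max M N)
  have key := eq_zero_of_abs_deriv_le_mul_abs_self_of_eq_zero_right (K := L)
    (f := fun s => y s - z s) (f' := fun s => g (y s) - g (z s)) (a := 0) (b := t)
    (cy.sub cz)
    (fun s hs => (hasDerivWithinAt_Ici_of_Icc hs (hy s (Ico_subset_Icc_self hs))).sub
      (hasDerivWithinAt_Ici_of_Icc hs (hz s (Ico_subset_Icc_self hs))))
    (by simp [h0])
    (fun s hs => by
      have hs' := Ico_subset_Icc_self hs
      exact hL _ (abs_le.1 ((hM s hs').trans (le_max_left _ _)))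
        _ (abs_le.1 ((hN s hs').trans (le_max_right _ _))))
  intro s hs
  exact sub_eq_zero.1 (key s hs)

lemma IsChar.unique {f g : ℝ → ℝ} (hg : ContDiff ℝ 1 g)
    {σ t b U0 X U X' U' : ℝ} (ht : 0 ≤ t) (h : IsChar f g σ t b U0 X U)
    (h' : IsChar f g σ t b U0 X' U') : X = X' ∧ U = U' := by
  obtain ⟨x, y, hx, hy, x0, y0, xt, yt⟩ := h
  obtain ⟨x', y', hx', hy', x0', y0', xt', yt'⟩ := h'
  have hyy := ode_unique hg hy hy' (by rw [y0, y0'])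
  have htm : t ∈ Icc 0 t := ⟨ht, le_rfl⟩
  refine ⟨?_, by rw [← yt, ← yt', hyy t htm]⟩
  have key := eq_zero_of_abs_deriv_le_mul_abs_self_of_eq_zero_right (K := 0)
    (f := fun s => x s - x' s)
    (f' := fun s => (deriv f (y s) - σ) - (deriv f (y' s) - σ)) (a := 0) (b := t)
    (fun s hs => ((hx s hs).sub (hx' s hs)).continuousWithinAt)
    (fun s hs => (hasDerivWithinAt_Ici_of_Icc hs (hx s (Ico_subset_Icc_self hs))).sub
      (hasDerivWithinAt_Ici_of_Icc hs (hx' s (Ico_subset_Icc_self hs))))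
    (by simp [x0, x0'])
    (fun s hs => by simp [hyy s (Ico_subset_Icc_self hs)])
  rw [← xt, ← xt']
  exact sub_eq_zero.1 (key t htm)

lemma IsClassicalSol.hasDerivAt_space {f g u0 : ℝ → ℝ} {u : ℝ → ℝ → ℝ}
    (hu : IsClassicalSol f g u0 u) {t : ℝ} (ht : 0 ≤ t) (x : ℝ) :
    HasDerivAt (u t)
      (fderivWithin ℝ (uncurry u) (Ici (0:ℝ) ×ˢ (univ : Set ℝ)) (t, x) (0, 1)) x := by
  have h1 := ((hu.1.differentiableOn one_ne_zero) (t, x) ⟨ht, mem_univ x⟩).hasFDerivWithinAt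
  have h2 : HasDerivWithinAt (fun z : ℝ => (t, z)) ((0:ℝ), (1:ℝ)) univ x :=
    ((hasDerivAt_const x t).prodMk (hasDerivAt_id x)).hasDerivWithinAt
  have hm : MapsTo (fun z : ℝ => (t, z)) univ (Ici (0:ℝ) ×ˢ (univ : Set ℝ)) :=
    fun z _ => ⟨ht, mem_univ z⟩
  have h3 := h1.comp_hasDerivWithinAt x h2 hm
  exact hasDerivWithinAt_univ.1 h3

lemma IsClassicalSol.hasDerivWithinAt_time {f g u0 : ℝ → ℝ} {u : ℝ → ℝ → ℝ}
    (hu : IsClassicalSol f g u0 u) {t : ℝ} (ht : 0 ≤ t) (x : ℝ) :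
    HasDerivWithinAt (fun s => u s x)
      (fderivWithin ℝ (uncurry u) (Ici (0:ℝ) ×ˢ (univ : Set ℝ)) (t, x) (1, 0)) (Ici 0) t := by
  have h1 := ((hu.1.differentiableOn one_ne_zero) (t, x) ⟨ht, mem_univ x⟩).hasFDerivWithinAt
  have h2 : HasDerivWithinAt (fun z : ℝ => (z, x)) ((1:ℝ), (0:ℝ)) (Ici 0) t :=
    ((hasDerivAt_id t).prodMk (hasDerivAt_const t x)).hasDerivWithinAt
  have hm : MapsTo (fun z : ℝ => (z, x)) (Ici 0) (Ici (0:ℝ) ×ˢ (univ : Set ℝ)) :=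
    fun z hz => ⟨hz, mem_univ x⟩
  exact h1.comp_hasDerivWithinAt t h2 hm

/-- A classical solution takes along each characteristic the value carried by it: the discrepancy
between the two obeys a linear differential inequality and vanishes initially. -/
lemma IsClassicalSol.eq_of_isChar {f g u0 : ℝ → ℝ} {u : ℝ → ℝ → ℝ}
    (hf : ContDiff ℝ 2 f) (hg : ContDiff ℝ 1 g)
    (hu : IsClassicalSol f g u0 u) {σ t b X U : ℝ} (ht : 0 ≤ t)
    (h : IsChar f g σ t b (u0 b) X U) : u t (X + σ * t) = U := by
  obtain ⟨x, y, hx, hy, x0, y0, xt, yt⟩ := h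
  have htm : t ∈ Icc 0 t := ⟨ht, le_rfl⟩
  set S : Set (ℝ × ℝ) := Ici (0:ℝ) ×ˢ (univ : Set ℝ) with hS
  have hSu : UniqueDiffOn ℝ S := (uniqueDiffOn_Ici 0).prod uniqueDiffOn_univ
  set D := fderivWithin ℝ (uncurry u) S with hD
  have cx : ContinuousOn x (Icc 0 t) := fun s hs => (hx s hs).continuousWithinAt
  have cy : ContinuousOn y (Icc 0 t) := fun s hs => (hy s hs).continuousWithinAt
  set P : ℝ → ℝ × ℝ := fun s => (s, x s + σ * s) with hP
  have cP : ContinuousOn P (Icc 0 t) := by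
    apply ContinuousOn.prodMk continuousOn_id
    exact cx.add (by fun_prop)
  have mP : MapsTo P (Icc 0 t) S := fun s hs => ⟨hs.1, mem_univ _⟩
  have cu : ContinuousOn (fun s => u s (x s + σ * s)) (Icc 0 t) := hu.1.continuousOn.comp cP mP
  have cD : ContinuousOn (fun s => D (P s) (0, 1)) (Icc 0 t) :=
    ((hu.1.continuousOn_fderivWithin hSu le_rfl).comp cP mP).clm_apply continuousOn_const
  obtain ⟨M, hM⟩ := exists_abs_le_of_continuousOn cy
  obtain ⟨N, hN⟩ := exists_abs_le_of_continuousOn cu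
  obtain ⟨C, hC⟩ := exists_abs_le_of_continuousOn cD
  obtain ⟨L, hL0, hL⟩ := exists_lip hg (-max M N) (max M N)
  have hdf : ContDiff ℝ 1 (deriv f) := contDiff_one_deriv hf
  obtain ⟨L', hL0', hL'⟩ := exists_lip hdf (-max M N) (max M N)
  have hder : ∀ s ∈ Icc 0 t, HasDerivWithinAt (fun s => u s (x s + σ * s) - y s)
      (D (P s) (1, deriv f (y s)) - g (y s)) (Icc 0 t) s := by
    intro s hs
    have h1 := ((hu.1.differentiableOn one_ne_zero) (P s) (mP hs)).hasFDerivWithinAt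
    have h2 : HasDerivWithinAt P (1, deriv f (y s)) (Icc 0 t) s := by
      refine (hasDerivWithinAt_id s _).prodMk ?_
      have := (hx s hs).add (((hasDerivAt_id s).const_mul σ).hasDerivWithinAt (s := Icc 0 t))
      exact this.congr_deriv (by ring)
    exact (h1.comp_hasDerivWithinAt s h2 mP).sub (hy s hs)
  have key := eq_zero_of_abs_deriv_le_mul_abs_self_of_eq_zero_right (K := L + L' * C)
    (f := fun s => u s (x s + σ * s) - y s)
    (f' := fun s => D (P s) (1, deriv f (y s)) - g (y s)) (a := 0) (b := t)
    (cu.sub cy)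
    (fun s hs => hasDerivWithinAt_Ici_of_Icc hs (hder s (Ico_subset_Icc_self hs)))
    (by simp [x0, y0, hu.2.1])
    (fun s hs => by
      have hs' := Ico_subset_Icc_self hs
      set v := u s (x s + σ * s) with hv
      have hpde := hu.2.2 s hs'.1 (x s + σ * s)
      rw [(hu.hasDerivAt_space hs'.1 _).deriv,
        (hu.hasDerivWithinAt_time hs'.1 _).derivWithin (uniqueDiffOn_Ici 0 s hs'.1)] at hpde
      have e1 : D (P s) (1, deriv f (y s)) = D (P s) (1, 0) + deriv f (y s) * D (P s) (0, 1) := by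
        rw [← smul_eq_mul, ← map_smul, ← map_add]; simp
      have e2 : D (P s) (1, deriv f (y s)) - g (y s)
          = (g v - g (y s)) - (deriv f v - deriv f (y s)) * D (P s) (0, 1) := by
        rw [e1]
        have : D (P s) (1, 0) + deriv f v * D (P s) (0, 1) = g v := hpde
        linarith
      have m1 := abs_le.1 ((hN s hs').trans (le_max_right M N))
      have m2 := abs_le.1 ((hM s hs').trans (le_max_left M N))
      have b1 := hL _ m1 _ m2
      have b2 := hL' _ m1 _ m2
      have b3 := hC s hs'
      rw [e2, Real.norm_eq_abs, Real.norm_eq_abs]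
      calc _ ≤ |g v - g (y s)| + |deriv f v - deriv f (y s)| * |D (P s) (0, 1)| := by
            rw [← abs_mul]; exact abs_sub _ _
        _ ≤ L * |v - y s| + (L' * |v - y s|) * C := by gcongr
        _ = _ := by ring)
  have := key t htm
  simp only [xt, yt] at this
  exact sub_eq_zero.1 this

/-! ### Characteristics near the stable state -/

lemma le_initial_of_deriv_nonpos {p p' : ℝ → ℝ} {t : ℝ}
    (hp : ∀ s ∈ Icc 0 t, HasDerivWithinAt p (p' s) (Icc 0 t) s)
    (hp' : ∀ s ∈ Icc 0 t, p' s ≤ 0) : ∀ s ∈ Icc 0 t, p s ≤ p 0 := by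
  have hd : ∀ s ∈ Ioo 0 t, HasDerivAt p (p' s) s := fun s hs =>
    (hp s (Ioo_subset_Icc_self hs)).hasDerivAt (Icc_mem_nhds hs.1 hs.2)
  have : AntitoneOn p (Icc 0 t) := by
    apply antitoneOn_of_deriv_nonpos (convex_Icc 0 t)
      (fun s hs => (hp s hs).continuousWithinAt)
    · rw [interior_Icc]
      exact fun s hs => (hd s hs).differentiableAt.differentiableWithinAt
    · rw [interior_Icc]
      exact fun s hs => by
        rw [(hd s hs).deriv]
        exact hp' s (Ioo_subset_Icc_self hs)
  intro s hs
  exact this ⟨le_rfl, hs.1.trans hs.2⟩ hs hs.1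

/-- Near a stable zero `m` of `g`, characteristics starting with a value in `[m-ε, m+ε]` exist
and keep their values in that interval.  The reaction term is first frozen outside the interval,
which gives a bounded Lipschitz field and hence existence on all of `[0,t]`. -/
lemma exists_stable_traj {f g : ℝ → ℝ} (hf : ContDiff ℝ 2 f) (hg : ContDiff ℝ 1 g)
    {m ε l : ℝ} (hε : 0 < ε) (hl : 0 ≤ l) (hgm : g m = 0)
    (hdis : ∀ a ∈ Icc (m - ε) (m + ε), ∀ b ∈ Icc (m - ε) (m + ε),
      (a - b) * (g a - g b) ≤ -l * (a - b) ^ 2)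
    (σ : ℝ) {t : ℝ} (ht : 0 ≤ t) (b U0 : ℝ) (hU0 : U0 ∈ Icc (m - ε) (m + ε)) :
    ∃ x y : ℝ → ℝ,
      (∀ s ∈ Icc 0 t, HasDerivWithinAt x (deriv f (y s) - σ) (Icc 0 t) s) ∧
      (∀ s ∈ Icc 0 t, HasDerivWithinAt y (g (y s)) (Icc 0 t) s) ∧
      x 0 = b ∧ y 0 = U0 ∧ ∀ s ∈ Icc 0 t, y s ∈ Icc (m - ε) (m + ε) := by
  have hle : m - ε ≤ m + ε := by linarith
  set c : ℝ → ℝ := fun U => (projIcc (m - ε) (m + ε) hle U : ℝ) with hc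
  have hcm : ∀ U, c U ∈ Icc (m - ε) (m + ε) := fun U => (projIcc _ _ hle U).2
  have hcl : ∀ a b, |c a - c b| ≤ |a - b| := fun a b => by
    have := (LipschitzWith.projIcc hle).dist_le_mul a b
    simpa [Subtype.dist_eq, Real.dist_eq] using this
  have hceq : ∀ U ∈ Icc (m - ε) (m + ε), c U = U := fun U hU => by
    simp [hc, projIcc_of_mem hle hU]
  obtain ⟨K, hK0, hK⟩ := exists_lip hg (m - ε) (m + ε)
  have hmI : m ∈ Icc (m - ε) (m + ε) := ⟨by linarith, by linarith⟩
  have hbd : ∀ U, |g (c U)| ≤ K * ε := fun U => by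
    have h1 := hK _ (hcm U) m hmI
    rw [hgm, sub_zero] at h1
    refine h1.trans (mul_le_mul_of_nonneg_left ?_ hK0)
    rw [abs_le]
    constructor <;> linarith [(hcm U).1, (hcm U).2]
  obtain ⟨y, hy0, hy⟩ := (IsPicardLindelof.of_time_independent (f := fun U => g (c U))
    (tmin := 0) (tmax := t) (t₀ := ⟨0, le_rfl, ht⟩) (x₀ := U0)
    (a := Real.toNNReal (K * ε * t)) (r := 0) (L := Real.toNNReal (K * ε)) (K := Real.toNNReal K)
    (fun U _ => by
      rw [Real.norm_eq_abs, Real.coe_toNNReal _ (by positivity)]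
      exact hbd U)
    (LipschitzOnWith.of_dist_le_mul fun a _ b _ => by
      rw [Real.coe_toNNReal _ hK0, Real.dist_eq, Real.dist_eq]
      exact (hK _ (hcm a) _ (hcm b)).trans (mul_le_mul_of_nonneg_left (hcl a b) hK0))
    (by
      rw [Real.coe_toNNReal _ (by positivity), Real.coe_toNNReal _ (by positivity)]
      simp [ht])).exists_eq_forall_mem_Icc_hasDerivWithinAt₀
  simp only at hy0 hy
  have hsign : ∀ U, (U - m) * g (c U) ≤ 0 := fun U => by
    have h1 := hdis _ (hcm U) m hmI
    rw [hgm, sub_zero] at h1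
    rcases lt_or_ge U (m - ε) with h | h
    · have e : c U = m - ε := by simp [hc, projIcc_of_le_left hle h.le]
      rw [e] at h1 ⊢
      have : 0 ≤ g (m - ε) := by nlinarith
      nlinarith
    rcases lt_or_ge (m + ε) U with h' | h'
    · have e : c U = m + ε := by simp [hc, projIcc_of_right_le hle h'.le]
      rw [e] at h1 ⊢
      have : g (m + ε) ≤ 0 := by nlinarith
      nlinarith
    · rw [hceq U ⟨h, h'⟩] at h1 ⊢
      nlinarith [sq_nonneg (U - m)]
  have hW := le_initial_of_deriv_nonpos (p := fun s => (y s - m) ^ 2)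
    (p' := fun s => 2 * (y s - m) * g (c (y s))) (t := t)
    (fun s hs => by
      have := ((hy s hs).sub_const m).pow 2
      exact this.congr_deriv (by simp))
    (fun s _ => by nlinarith [hsign (y s)])
  have hyI : ∀ s ∈ Icc 0 t, y s ∈ Icc (m - ε) (m + ε) := fun s hs => by
    have h1 := hW s hs
    simp only [hy0] at h1
    have h2 : |U0 - m| ≤ ε := by
      rw [abs_le]; constructor <;> linarith [hU0.1, hU0.2]
    have h3 := abs_le.1 ((sq_le_sq.1 h1).trans h2)
    constructor <;> linarith [h3.1, h3.2]
  have hy' : ∀ s ∈ Icc 0 t, HasDerivWithinAt y (g (y s)) (Icc 0 t) s := fun s hs => by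
    have := hy s hs
    rwa [hceq _ (hyI s hs)] at this
  have cy : ContinuousOn y (Icc 0 t) := fun s hs => (hy' s hs).continuousWithinAt
  -- Reparametrising by the projection onto `[0,t]` makes the speed continuous on all of `ℝ`.
  set k : ℝ → ℝ := fun s => deriv f (y (projIcc 0 t ht s)) - σ with hk
  have ck : Continuous k := by
    have h1 : Continuous fun s => y (projIcc 0 t ht s : ℝ) :=
      cy.comp_continuous (continuous_subtype_val.comp continuous_projIcc)
        (fun s => (projIcc 0 t ht s).2)
    exact ((hf.continuous_deriv (by norm_num)).comp h1).sub continuous_const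
  refine ⟨fun s => b + ∫ r in (0:ℝ)..s, k r, y, fun s hs => ?_, hy', by simp, hy0, hyI⟩
  have h1 := ((ck.integral_hasStrictDerivAt 0 s).hasDerivAt.const_add b).hasDerivWithinAt
    (s := Icc 0 t)
  have h2 : k s = deriv f (y s) - σ := by simp [hk, projIcc_of_mem ht hs]
  rwa [h2] at h1

/-- Contraction of characteristics near a stable zero: values contract exponentially, and the
relative drift of positions is controlled by the initial difference of the values. -/
lemma stable_traj_contract {f g : ℝ → ℝ}
    {m ε l L : ℝ} (hl : 0 < l) (hL0 : 0 ≤ L)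
    (hdis : ∀ a ∈ Icc (m - ε) (m + ε), ∀ b ∈ Icc (m - ε) (m + ε),
      (a - b) * (g a - g b) ≤ -l * (a - b) ^ 2)
    (hL : ∀ a ∈ Icc (m - ε) (m + ε), ∀ b ∈ Icc (m - ε) (m + ε),
      |deriv f a - deriv f b| ≤ L * |a - b|)
    {σ t : ℝ} {x y x' y' : ℝ → ℝ}
    (hx : ∀ s ∈ Icc 0 t, HasDerivWithinAt x (deriv f (y s) - σ) (Icc 0 t) s)
    (hy : ∀ s ∈ Icc 0 t, HasDerivWithinAt y (g (y s)) (Icc 0 t) s)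
    (hyI : ∀ s ∈ Icc 0 t, y s ∈ Icc (m - ε) (m + ε))
    (hx' : ∀ s ∈ Icc 0 t, HasDerivWithinAt x' (deriv f (y' s) - σ) (Icc 0 t) s)
    (hy' : ∀ s ∈ Icc 0 t, HasDerivWithinAt y' (g (y' s)) (Icc 0 t) s)
    (hyI' : ∀ s ∈ Icc 0 t, y' s ∈ Icc (m - ε) (m + ε)) :
    ∀ s ∈ Icc 0 t, |y s - y' s| ≤ Real.exp (-(l * s)) * |y 0 - y' 0| ∧
      |(x s - x' s) - (x 0 - x' 0)| ≤ L / l * |y 0 - y' 0| := by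
  have hE : ∀ s, HasDerivAt (fun s => Real.exp (2 * l * s)) (2 * l * Real.exp (2 * l * s)) s := by
    intro s
    have := ((hasDerivAt_id s).const_mul (2 * l)).exp
    exact this.congr_deriv (by simp; ring)
  have h1 := le_initial_of_deriv_nonpos
    (p := fun s => (y s - y' s) ^ 2 * Real.exp (2 * l * s))
    (p' := fun s => (2 * (y s - y' s) * (g (y s) - g (y' s))) * Real.exp (2 * l * s)
      + (y s - y' s) ^ 2 * (2 * l * Real.exp (2 * l * s))) (t := t)
    (fun s hs => by
      have := (((hy s hs).sub (hy' s hs)).pow 2).mul (hE s).hasDerivWithinAt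
      exact this.congr_deriv (by simp))
    (fun s hs => by
      have := hdis _ (hyI s hs) _ (hyI' s hs)
      have e : (2 * (y s - y' s) * (g (y s) - g (y' s))) * Real.exp (2 * l * s)
        + (y s - y' s) ^ 2 * (2 * l * Real.exp (2 * l * s)) = 2 * ((y s - y' s) * (g (y s) - g (y' s))
          - -l * (y s - y' s) ^ 2) * Real.exp (2 * l * s) := by ring
      show (2 * (y s - y' s) * (g (y s) - g (y' s))) * Real.exp (2 * l * s)
        + (y s - y' s) ^ 2 * (2 * l * Real.exp (2 * l * s)) ≤ 0
      rw [e]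
      exact mul_nonpos_of_nonpos_of_nonneg (by linarith) (Real.exp_pos _).le)
  have hy1 : ∀ s ∈ Icc 0 t, |y s - y' s| ≤ Real.exp (-(l * s)) * |y 0 - y' 0| := by
    intro s hs
    have h2 := h1 s hs
    simp only [mul_zero, Real.exp_zero, mul_one] at h2
    have e : Real.exp (2 * l * s) = Real.exp (l * s) ^ 2 := by
      rw [← Real.exp_nat_mul]; congr 1; push_cast; ring
    rw [e, ← mul_pow] at h2
    have h3 := sq_le_sq.1 h2
    rw [abs_mul, abs_of_pos (Real.exp_pos _)] at h3
    rw [Real.exp_neg, inv_mul_eq_div, le_div_iff₀ (Real.exp_pos _)]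
    exact h3
  intro s hs
  refine ⟨hy1 s hs, ?_⟩
  have h4 := image_norm_le_of_norm_deriv_right_le_deriv_boundary
    (f := fun s => (x s - x' s) - (x 0 - x' 0)) (a := 0) (b := t)
    (f' := fun s => (deriv f (y s) - σ) - (deriv f (y' s) - σ))
    (B := fun s => L / l * |y 0 - y' 0| * (1 - Real.exp (-(l * s))))
    (B' := fun s => L * (Real.exp (-(l * s)) * |y 0 - y' 0|))
    (fun s hs => (((hx s hs).sub (hx' s hs)).sub_const _).continuousWithinAt)
    (fun s hs => ((hasDerivWithinAt_Ici_of_Icc hs (hx s (Ico_subset_Icc_self hs))).sub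
      (hasDerivWithinAt_Ici_of_Icc hs (hx' s (Ico_subset_Icc_self hs)))).sub_const _)
    (by simp)
    (fun s => by
      have := (((((hasDerivAt_id s).const_mul l).neg).exp).const_sub 1).const_mul
        (L / l * |y 0 - y' 0|)
      exact this.congr_deriv (by simp; field_simp))
    (fun s hs => by
      have hs' := Ico_subset_Icc_self hs
      have := hL _ (hyI s hs') _ (hyI' s hs')
      have := mul_le_mul_of_nonneg_left (hy1 s hs') hL0
      rw [Real.norm_eq_abs]
      simp only [sub_sub_sub_cancel_right]
      linarith)
    hs
  rw [Real.norm_eq_abs] at h4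
  refine h4.trans ?_
  have : 0 ≤ L / l * |y 0 - y' 0| := by positivity
  nlinarith [Real.exp_pos (-(l * s))]

/-! ### Asymptotics of the front -/

lemma exists_sign {q : ℝ → ℝ} (hq : Continuous q) (h0 : ∀ x, q x ≠ 0) :
    ∃ ϵ : ℝ, |ϵ| = 1 ∧ ∀ x, ϵ * q x = |q x| := by
  rcases lt_or_gt_of_ne (h0 0) with h | h
  · refine ⟨-1, by simp, fun x => ?_⟩
    have : q x < 0 := by
      by_contra! h'
      obtain ⟨z, hz⟩ := mem_range_of_exists_le_of_exists_ge hq ⟨0, h.le⟩ ⟨x, h'⟩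
      exact h0 z hz
    rw [abs_of_neg this]; ring
  · refine ⟨1, by simp, fun x => ?_⟩
    have : 0 < q x := by
      by_contra! h'
      obtain ⟨z, hz⟩ := mem_range_of_exists_le_of_exists_ge hq ⟨x, h'⟩ ⟨0, h.le⟩
      exact h0 z hz
    rw [abs_of_pos this]; ring

lemma contDiff_two_of_smooth {h : ℝ → ℝ} (hh : ContDiff ℝ (⊤ : ℕ∞) h) : ContDiff ℝ 2 h := by
  exact_mod_cast contDiff_infty.1 hh 2

lemma exists_bound_of_limits {q : ℝ → ℝ} (hq : Continuous q) {a b : ℝ}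
    (ha : Tendsto q atBot (nhds a)) (hb : Tendsto q atTop (nhds b)) :
    ∃ M > 0, ∀ x, |q x| ≤ M := by
  have h1 : ∀ᶠ x in atBot, |q x| < |a| + 1 := ha.abs.eventually_lt_const (by linarith)
  have h2 : ∀ᶠ x in atTop, |q x| < |b| + 1 := hb.abs.eventually_lt_const (by linarith)
  obtain ⟨A, hA⟩ := eventually_atBot.1 h1
  obtain ⟨B, hB⟩ := eventually_atTop.1 h2
  obtain ⟨C, hC⟩ := (isCompact_Icc (a := A) (b := B)).exists_bound_of_continuousOn hq.continuousOn
  refine ⟨|a| + 1 + (|b| + 1) + |C|, by positivity, fun x => ?_⟩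
  have := abs_nonneg a
  have := abs_nonneg b
  have := abs_nonneg C
  rcases le_total x A with h | h
  · linarith [hA x h]
  rcases le_total B x with h' | h'
  · linarith [hB x h']
  · have := hC x ⟨h, h'⟩
    rw [Real.norm_eq_abs] at this
    linarith [le_abs_self C]

/-- Near a nondegenerate zero, `g` grows at least linearly with the sign of its slope. -/
lemma eventually_linear_lower {g : ℝ → ℝ} (hg : Differentiable ℝ g) {p : ℝ} (h0 : g p = 0)
    (hp : 0 < deriv g p) :
    ∀ᶠ U in nhds p, deriv g p / 2 * (U - p) ^ 2 ≤ (U - p) * g U := by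
  have h := (hg p).hasDerivAt.isLittleO
  have h2 := h.def (half_pos hp)
  filter_upwards [h2] with U hU
  rw [h0, sub_zero, smul_eq_mul, Real.norm_eq_abs, Real.norm_eq_abs] at hU
  have : |(U - p) * (g U - (U - p) * deriv g p)| ≤ deriv g p / 2 * (U - p) ^ 2 := by
    rw [abs_mul, ← sq_abs (U - p)]
    nlinarith [abs_nonneg (U - p)]
  nlinarith [(abs_le.1 this).1]

/-- All characteristic speeds of the front are negative in its moving frame: otherwise the profile
equation would make `(ub - up)²` nondecreasing near `+∞`, against its convergence to `0`. -/
lemma front_speed_neg {f g : ℝ → ℝ} (hf : ContDiff ℝ 2 f) (hg : ContDiff ℝ 1 g)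
    {σ : ℝ} {ub : ℝ → ℝ} (hub : ContDiff ℝ 2 ub)
    (hub' : ∀ x, deriv ub x ≠ 0) (hnc : ∀ x, deriv f (ub x) ≠ σ)
    (hprof : ∀ x, (deriv f (ub x) - σ) * deriv ub x = g (ub x)) {up : ℝ}
    (hlp : Tendsto ub atTop (nhds up)) (hgup : g up = 0) (hg'up : 0 < deriv g up) :
    ∀ x, deriv f (ub x) < σ := by
  have cf : Continuous fun x => deriv f (ub x) :=
    (hf.continuous_deriv (by norm_num)).comp hub.continuous
  have dub : Differentiable ℝ ub := hub.differentiable two_ne_zero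
  by_contra! hcon
  obtain ⟨x₀, hx₀⟩ := hcon
  have hpos : ∀ x, 0 < deriv f (ub x) - σ := by
    intro x
    by_contra! hx
    obtain ⟨z, hz⟩ := mem_range_of_exists_le_of_exists_ge cf ⟨x, by linarith⟩ ⟨x₀, hx₀⟩
    exact hnc z hz
  obtain ⟨N, hN⟩ := eventually_atTop.1
    (hlp.eventually (eventually_linear_lower (hg.differentiable one_ne_zero) hgup hg'up))
  have hmono : MonotoneOn (fun x => (ub x - up) ^ 2) (Ici N) := by
    apply monotoneOn_of_deriv_nonneg (convex_Ici N)
    · exact ((hub.continuous.sub continuous_const).pow 2).continuousOn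
    · exact fun x _ => (((dub x).sub_const up).pow 2).differentiableWithinAt
    · intro x hx
      rw [interior_Ici] at hx
      have hd : HasDerivAt (fun x => (ub x - up) ^ 2) (2 * (ub x - up) * deriv ub x) x := by
        have := (((dub x).hasDerivAt).sub_const up).pow 2
        exact this.congr_deriv (by simp)
      rw [hd.deriv]
      have h1 := hN x (le_of_lt hx)
      have h2 : 0 ≤ (deriv f (ub x) - σ) * ((ub x - up) * deriv ub x) := by
        have : (deriv f (ub x) - σ) * ((ub x - up) * deriv ub x) = (ub x - up) * g (ub x) := by
          rw [← hprof x]; ring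
        rw [this]
        exact le_trans (by positivity) h1
      have h3 := nonneg_of_mul_nonneg_right h2 (hpos x)
      nlinarith
  have hlim : Tendsto (fun x => (ub x - up) ^ 2) atTop (nhds 0) := by
    have := (hlp.sub_const up).pow 2
    simpa using this
  have hz : ∀ x ≥ N, ub x = up := by
    intro x hx
    have : (ub x - up) ^ 2 ≤ 0 := by
      apply ge_of_tendsto hlim
      filter_upwards [eventually_ge_atTop x] with z hz
      exact hmono hx (le_trans hx hz) hz
    have := pow_eq_zero_iff (two_ne_zero) |>.1 (le_antisymm this (sq_nonneg _))
    linarith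
  apply hub' (N + 1)
  have : ub =ᶠ[nhds (N + 1)] fun _ => up := by
    filter_upwards [eventually_ge_nhds (show N < N + 1 by linarith)] with x hx
    exact hz x hx
  rw [this.deriv_eq]
  simp

/-- The quantitative properties of the front used in the stability argument, `κ` being the decay
rate of the weight `Ω x = exp (-(κ * max x 0))`. -/
structure FrontBounds (f : ℝ → ℝ) (σ : ℝ) (ub : ℝ → ℝ) (κ : ℝ) : Prop where
  speed : ∃ c0 > 0, ∃ c1 > 0, ∀ x, c0 ≤ σ - deriv f (ub x) ∧ σ - deriv f (ub x) ≤ c1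
  upper : ∃ M > 0, ∀ x, |deriv ub x| ≤ M * Real.exp (-(κ * max x 0)) ∧
    |deriv (deriv ub) x| ≤ M * Real.exp (-(κ * max x 0))
  lower : ∀ R, ∃ m > 0, ∀ x ≥ -R, m * Real.exp (-(κ * max x 0)) ≤ |deriv ub x|
  left : Tendsto (deriv ub) atBot (nhds 0)

/-- The front approaches `up` exactly at the rate `κ`: writing `ub'' = H ub'`, one has
`H + κ = O(|ub'|)` near `+∞`, which is integrable since `ub` is bounded and monotone, so that
`log |ub'| + κ x` stays bounded. -/
lemma frontBounds {f g : ℝ → ℝ} (hf : ContDiff ℝ (⊤ : ℕ∞) f) (hg : ContDiff ℝ (⊤ : ℕ∞) g)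
    {σ : ℝ} {ub : ℝ → ℝ} (hub : ContDiff ℝ (⊤ : ℕ∞) ub)
    (hubbd : ∃ M, ∀ x, |ub x| ≤ M)
    (hub' : ∀ x, deriv ub x ≠ 0) (hnc : ∀ x, deriv f (ub x) ≠ σ)
    (hprof : ∀ x, (deriv f (ub x) - σ) * deriv ub x = g (ub x)) {um up : ℝ}
    (hlm : Tendsto ub atBot (nhds um)) (hlp : Tendsto ub atTop (nhds up))
    (hgum : g um = 0) (hgup : g up = 0) (hg'up : 0 < deriv g up)
    (hfum : deriv f um ≠ σ) (hfup : deriv f up ≠ σ)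
    {κp : ℝ} (hκp : κp = deriv g up / |deriv f up - σ|) : FrontBounds f σ ub κp := by
  have hf2 : ContDiff ℝ 2 f := contDiff_two_of_smooth hf
  have hf3 : ContDiff ℝ 1 (deriv f) := contDiff_one_deriv hf2
  have hg2 : ContDiff ℝ 2 g := contDiff_two_of_smooth hg
  have hg3 : ContDiff ℝ 1 (deriv g) := contDiff_one_deriv hg2
  have hg1 : ContDiff ℝ 1 g := hg.of_le (by exact_mod_cast le_top)
  have hub2 : ContDiff ℝ 2 ub := contDiff_two_of_smooth hub
  have hub3 : ContDiff ℝ 1 (deriv ub) := contDiff_one_deriv hub2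
  have dub : Differentiable ℝ ub := hub2.differentiable two_ne_zero
  have cub := hub2.continuous
  have hneg := front_speed_neg hf2 hg1 hub2 hub' hnc hprof hlp hgup hg'up
  have cf' : Continuous (deriv f) := hf3.continuous
  have cg' : Continuous (deriv g) := hg3.continuous
  have hcp : Tendsto (fun x => deriv f (ub x)) atTop (nhds (deriv f up)) :=
    (cf'.tendsto up).comp hlp
  have hcm : Tendsto (fun x => deriv f (ub x)) atBot (nhds (deriv f um)) :=
    (cf'.tendsto um).comp hlm
  have hup : deriv f up < σ :=
    lt_of_le_of_ne (le_of_tendsto hcp (Eventually.of_forall fun x => (hneg x).le)) hfup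
  have hum : deriv f um < σ :=
    lt_of_le_of_ne (le_of_tendsto hcm (Eventually.of_forall fun x => (hneg x).le)) hfum
  have hne : ∀ x, deriv f (ub x) - σ ≠ 0 := fun x => sub_ne_zero.2 (hnc x)
  have hspeed : ∃ c0 > 0, ∃ c1 > 0, ∀ x, c0 ≤ σ - deriv f (ub x) ∧ σ - deriv f (ub x) ≤ c1 := by
    have cq : Continuous fun x => σ - deriv f (ub x) := by fun_prop
    obtain ⟨c1, hc1, h1⟩ := exists_bound_of_limits cq (hcm.const_sub σ) (hcp.const_sub σ)
    obtain ⟨M, hM, h2⟩ := exists_bound_of_limits (cq.inv₀ fun x => (sub_pos.2 (hneg x)).ne')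
      ((hcm.const_sub σ).inv₀ (sub_pos.2 hum).ne')
      ((hcp.const_sub σ).inv₀ (sub_pos.2 hup).ne')
    refine ⟨M⁻¹, by positivity, c1, hc1, fun x => ⟨?_, (le_abs_self _).trans (h1 x)⟩⟩
    exact inv_le_of_inv_le₀ (sub_pos.2 (hneg x)) ((le_abs_self _).trans (h2 x))
  have hub'eq : ∀ x, deriv ub x = g (ub x) / (deriv f (ub x) - σ) := fun x => by
    rw [← hprof x]; field_simp [hne x]
  have hleft : Tendsto (deriv ub) atBot (nhds 0) := by
    have : Tendsto (fun x => g (ub x) / (deriv f (ub x) - σ)) atBot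
        (nhds (g um / (deriv f um - σ))) :=
      ((hg1.continuous.tendsto um).comp hlm).div (hcm.sub_const σ) (sub_ne_zero.2 hfum)
    rw [hgum, zero_div] at this
    exact this.congr fun x => (hub'eq x).symm
  have hright : Tendsto (deriv ub) atTop (nhds 0) := by
    have : Tendsto (fun x => g (ub x) / (deriv f (ub x) - σ)) atTop
        (nhds (g up / (deriv f up - σ))) :=
      ((hg1.continuous.tendsto up).comp hlp).div (hcp.sub_const σ) (sub_ne_zero.2 hfup)
    rw [hgup, zero_div] at this
    exact this.congr fun x => (hub'eq x).symm
  -- `H` is the logarithmic derivative of `ub'`.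
  set H : ℝ → ℝ := fun x =>
    (deriv g (ub x) - deriv (deriv f) (ub x) * deriv ub x) / (deriv f (ub x) - σ) with hH
  have cf'' : Continuous (deriv (deriv f)) := hf3.continuous_deriv le_rfl
  have cub' : Continuous (deriv ub) := hub3.continuous
  have cH : Continuous H := by
    apply Continuous.div _ _ hne <;> fun_prop
  have hH' : ∀ x, deriv (deriv ub) x = H x * deriv ub x := by
    intro x
    have d1 : HasDerivAt (fun x => (deriv f (ub x) - σ) * deriv ub x)
        (deriv (deriv f) (ub x) * deriv ub x * deriv ub x
          + (deriv f (ub x) - σ) * deriv (deriv ub) x) x :=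
      ((((hf3.differentiable one_ne_zero) (ub x)).hasDerivAt.comp x (dub x).hasDerivAt).sub_const
        σ).mul ((hub3.differentiable one_ne_zero) x).hasDerivAt
    have d2 : HasDerivAt (fun x => (deriv f (ub x) - σ) * deriv ub x)
        (deriv g (ub x) * deriv ub x) x := by
      have := ((hg1.differentiable one_ne_zero) (ub x)).hasDerivAt.comp x (dub x).hasDerivAt
      rwa [show (fun x => (deriv f (ub x) - σ) * deriv ub x) = g ∘ ub from funext hprof]
    have := d1.unique d2
    simp only [hH]
    rw [div_mul_eq_mul_div, eq_div_iff (hne x)]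
    linarith
  have hHm : Tendsto H atBot (nhds ((deriv g um - deriv (deriv f) um * 0) / (deriv f um - σ))) :=
    (((cg'.tendsto um).comp hlm).sub (((cf''.tendsto um).comp hlm).mul hleft)).div
      (hcm.sub_const σ) (sub_ne_zero.2 hfum)
  have hHp : Tendsto H atTop (nhds ((deriv g up - deriv (deriv f) up * 0) / (deriv f up - σ))) :=
    (((cg'.tendsto up).comp hlp).sub (((cf''.tendsto up).comp hlp).mul hright)).div
      (hcp.sub_const σ) (sub_ne_zero.2 hfup)
  obtain ⟨MH, hMH, hHb⟩ := exists_bound_of_limits cH hHm hHp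
  obtain ⟨Mu, hMu, hub'b⟩ := exists_bound_of_limits cub' hleft hright
  obtain ⟨M0, hM0⟩ := hubbd
  obtain ⟨c0, hc0, c1, hc1, hc⟩ := hspeed
  have hκ : κp * (σ - deriv f up) = deriv g up := by
    rw [hκp, abs_of_neg (by linarith), neg_sub, div_mul_cancel₀ _ (by linarith)]
  have hκpos : 0 < κp := by
    rw [hκp]; exact div_pos hg'up (abs_pos.2 (sub_ne_zero.2 hfup))
  -- The deviation of `H` from its limit is controlled by `|ub'|`.
  obtain ⟨C, hC0, N, hN⟩ : ∃ C ≥ 0, ∃ N, ∀ x ≥ N, |H x + κp| ≤ C * |deriv ub x| := by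
    obtain ⟨L1, hL10, hL1⟩ := exists_lip hg3 (-(max M0 |up|)) (max M0 |up|)
    obtain ⟨L2, hL20, hL2⟩ := exists_lip hf3 (-(max M0 |up|)) (max M0 |up|)
    obtain ⟨Mf, hMf, hf''b⟩ := exists_bound_of_limits (cf''.comp cub)
      ((cf''.tendsto um).comp hlm) ((cf''.tendsto up).comp hlp)
    obtain ⟨N, hN⟩ := eventually_atTop.1
      (hlp.eventually (eventually_linear_lower (hg.differentiable (by simp)) hgup hg'up))
    refine ⟨((L1 + κp * L2) * (2 * c1 / deriv g up) + Mf) / c0, by positivity, N, fun x hx => ?_⟩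
    have iu : ub x ∈ Icc (-(max M0 |up|)) (max M0 |up|) :=
      abs_le.1 ((hM0 x).trans (le_max_left _ _))
    have ip : up ∈ Icc (-(max M0 |up|)) (max M0 |up|) := abs_le.1 (le_max_right _ _)
    have e : H x + κp = ((deriv g (ub x) - deriv g up) + κp * (deriv f (ub x) - deriv f up)
        - deriv (deriv f) (ub x) * deriv ub x) / (deriv f (ub x) - σ) := by
      simp only [hH]
      rw [eq_div_iff (hne x), add_mul, div_mul_cancel₀ _ (hne x)]
      linarith
    have hdist : |ub x - up| ≤ 2 * c1 / deriv g up * |deriv ub x| := by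
      have h1 := hN x hx
      have h2 : deriv g up / 2 * |ub x - up| ≤ |g (ub x)| := by
        rcases eq_or_ne (ub x) up with h | h
        · simp [h]
        · have h3 : deriv g up / 2 * |ub x - up| * |ub x - up| ≤ |g (ub x)| * |ub x - up| := by
            calc _ = deriv g up / 2 * (ub x - up) ^ 2 := by rw [← sq_abs (ub x - up)]; ring
              _ ≤ _ := h1
              _ ≤ |(ub x - up) * g (ub x)| := le_abs_self _
              _ = _ := by rw [abs_mul]; ring
          exact le_of_mul_le_mul_right h3 (abs_pos.2 (sub_ne_zero.2 h))
      have h4 : |g (ub x)| ≤ c1 * |deriv ub x| := by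
        rw [← hprof x, abs_mul, abs_of_neg (by linarith [hneg x])]
        exact mul_le_mul_of_nonneg_right (by linarith [(hc x).2]) (abs_nonneg _)
      rw [div_mul_eq_mul_div, le_div_iff₀ hg'up]
      linarith
    rw [e, abs_div, abs_of_neg (show deriv f (ub x) - σ < 0 by linarith [hneg x]), neg_sub,
      div_mul_eq_mul_div]
    have h5 : |(deriv g (ub x) - deriv g up) + κp * (deriv f (ub x) - deriv f up)
        - deriv (deriv f) (ub x) * deriv ub x|
        ≤ ((L1 + κp * L2) * (2 * c1 / deriv g up) + Mf) * |deriv ub x| := by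
      have b1 := hL1 _ iu _ ip
      have b2 := hL2 _ iu _ ip
      have b3 : |deriv (deriv f) (ub x)| ≤ Mf := hf''b x
      calc _ ≤ |(deriv g (ub x) - deriv g up) + κp * (deriv f (ub x) - deriv f up)|
            + |deriv (deriv f) (ub x) * deriv ub x| := abs_sub _ _
        _ ≤ |deriv g (ub x) - deriv g up| + |κp * (deriv f (ub x) - deriv f up)|
            + |deriv (deriv f) (ub x) * deriv ub x| := by gcongr; exact abs_add_le _ _
        _ = |deriv g (ub x) - deriv g up| + κp * |deriv f (ub x) - deriv f up|
            + |deriv (deriv f) (ub x)| * |deriv ub x| := by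
              rw [abs_mul, abs_mul, abs_of_pos hκpos]
        _ ≤ L1 * |ub x - up| + κp * (L2 * |ub x - up|) + Mf * |deriv ub x| := by gcongr
        _ = (L1 + κp * L2) * |ub x - up| + Mf * |deriv ub x| := by ring
        _ ≤ (L1 + κp * L2) * (2 * c1 / deriv g up * |deriv ub x|) + Mf * |deriv ub x| := by
              gcongr
        _ = _ := by ring
    exact div_le_div₀ ((abs_nonneg _).trans h5) h5 hc0 (hc x).1
  -- A sign `ϵ` makes `ϵ * ub` increasing.
  obtain ⟨ϵ, hϵ, hϵpos⟩ := exists_sign cub' hub'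
  set ℓ : ℝ → ℝ := fun x => Real.log (deriv ub x) + κp * x with hℓ
  have dℓ : ∀ x, HasDerivAt ℓ (H x + κp) x := by
    intro x
    have h1 := (((hub3.differentiable one_ne_zero) x).hasDerivAt.log (hub' x)).add
      ((hasDerivAt_id x).const_mul κp)
    refine h1.congr_deriv ?_
    rw [hH' x, mul_div_cancel_right₀ _ (hub' x), mul_one]
  have cℓ : Continuous ℓ := continuous_iff_continuousAt.2 fun x => (dℓ x).continuousAt
  have hℓN : ∀ x ≥ N, |ℓ x - ℓ N| ≤ C * (2 * M0) := by
    intro x hx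
    have h4 := image_norm_le_of_norm_deriv_right_le_deriv_boundary
      (f := fun s => ℓ s - ℓ N) (a := N) (b := x)
      (f' := fun s => H s + κp)
      (B := fun s => C * (ϵ * ub s - ϵ * ub N))
      (B' := fun s => C * |deriv ub s|)
      (cℓ.sub continuous_const).continuousOn
      (fun s _ => ((dℓ s).sub_const _).hasDerivWithinAt)
      (by simp)
      (fun s => by
        have := (((dub s).hasDerivAt.const_mul ϵ).sub_const (ϵ * ub N)).const_mul C
        rwa [hϵpos] at this)
      (fun s hs => hN s hs.1) (right_mem_Icc.2 hx)
    rw [Real.norm_eq_abs] at h4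
    refine h4.trans (mul_le_mul_of_nonneg_left ?_ hC0)
    have h1 : ϵ * ub x ≤ M0 := (le_abs_self _).trans (by rw [abs_mul, hϵ, one_mul]; exact hM0 x)
    have h2 : -(ϵ * ub N) ≤ M0 :=
      (neg_le_abs _).trans (by rw [abs_mul, hϵ, one_mul]; exact hM0 N)
    linarith
  have hℓb : ∀ R, ∃ B, ∀ x ≥ -R, |ℓ x| ≤ B := by
    intro R
    obtain ⟨B, hB⟩ := (isCompact_Icc (a := -R) (b := N)).exists_bound_of_continuousOn
      cℓ.continuousOn
    refine ⟨|B| + |ℓ N| + |C * (2 * M0)|, fun x hx => ?_⟩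
    have := abs_nonneg B
    have := abs_nonneg (ℓ N)
    have := abs_nonneg (C * (2 * M0))
    rcases le_total x N with h | h
    · have := hB x ⟨hx, h⟩
      rw [Real.norm_eq_abs] at this
      linarith [le_abs_self B]
    · have h1 := hℓN x h
      have h2 : |ℓ x| ≤ |ℓ x - ℓ N| + |ℓ N| := by
        have := abs_add_le (ℓ x - ℓ N) (ℓ N)
        simpa using this
      linarith [le_abs_self (C * (2 * M0))]
  have hexp : ∀ x, |deriv ub x| = Real.exp (ℓ x - κp * x) := by
    intro x
    simp only [hℓ, add_sub_cancel_right]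
    rw [Real.exp_log_eq_abs (hub' x)]
  have hupper : ∃ M > 0, ∀ x, |deriv ub x| ≤ M * Real.exp (-(κp * max x 0)) := by
    obtain ⟨B, hB⟩ := hℓb 0
    refine ⟨Real.exp B + Mu, by positivity, fun x => ?_⟩
    rcases le_total 0 x with h | h
    · rw [max_eq_left h, hexp x, add_mul, ← Real.exp_add]
      have : Real.exp (ℓ x - κp * x) ≤ Real.exp (B + -(κp * x)) := by
        apply Real.exp_le_exp.2
        linarith [(abs_le.1 (hB x (by simpa using h))).2]
      have h2 : 0 ≤ Mu * Real.exp (-(κp * x)) := by positivity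
      linarith
    · rw [max_eq_right h]
      simp only [mul_zero, neg_zero, Real.exp_zero, mul_one]
      linarith [hub'b x, Real.exp_pos B]
  obtain ⟨M, hM, hMb⟩ := hupper
  refine ⟨⟨c0, hc0, c1, hc1, hc⟩, ⟨M * (1 + MH), by positivity, fun x => ⟨?_, ?_⟩⟩, ?_, hleft⟩
  · refine (hMb x).trans (mul_le_mul_of_nonneg_right ?_ (Real.exp_pos _).le)
    nlinarith
  · rw [hH' x, abs_mul]
    calc _ ≤ MH * (M * Real.exp (-(κp * max x 0))) :=
          mul_le_mul (hHb x) (hMb x) (abs_nonneg _) hMH.le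
      _ ≤ _ := by
          have : 0 ≤ M * Real.exp (-(κp * max x 0)) := by positivity
          nlinarith
  · intro R
    obtain ⟨B, hB⟩ := hℓb R
    refine ⟨Real.exp (-B), Real.exp_pos _, fun x hx => ?_⟩
    rw [hexp x, ← Real.exp_add]
    apply Real.exp_le_exp.2
    have h1 := (abs_le.1 (hB x hx)).1
    have h2 := mul_le_mul_of_nonneg_left (le_max_left x 0) hκpos.le
    linarith

/-! ### Flow along the front, phase shifts and slopes -/

lemma hasDerivAt_invFun {q q' : ℝ → ℝ} (hq : ∀ x, HasStrictDerivAt q (q' x) x)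
    (h0 : ∀ x, q' x ≠ 0) (hinj : Injective q) (x : ℝ) :
    HasDerivAt (invFun q) (q' x)⁻¹ (q x) :=
  ((hq x).to_local_left_inverse (h0 x)
    (Eventually.of_forall (leftInverse_invFun hinj))).hasDerivAt

/-- The flow of `Y' = -c(Y)` for a continuous speed `c` pinched between positive constants.  With
`Q' = 1/c` it is given by `Q (Y t y) = Q y - t`, hence the formula for `∂Y/∂y`. -/
lemma exists_flow {c : ℝ → ℝ} (hc : Continuous c) {c0 c1 : ℝ} (hc0 : 0 < c0)
    (hb : ∀ x, c0 ≤ c x ∧ c x ≤ c1) :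
    ∃ Y : ℝ → ℝ → ℝ, (∀ y, Y 0 y = y) ∧
      (∀ s y, HasDerivAt (fun s => Y s y) (-c (Y s y)) s) ∧
      (∀ s y, HasDerivAt (Y s) (c (Y s y) / c y) y) ∧
      (∀ s ≥ 0, ∀ y, y - c1 * s ≤ Y s y ∧ Y s y ≤ y - c0 * s) := by
  have hpos : ∀ x, 0 < c x := fun x => hc0.trans_le (hb x).1
  have hc1 : 0 < c1 := (hpos 0).trans_le (hb 0).2
  have hci : Continuous fun x => (c x)⁻¹ := hc.inv₀ fun x => (hpos x).ne'
  set Q : ℝ → ℝ := fun y => ∫ r in (0:ℝ)..y, (c r)⁻¹ with hQ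
  have dQ : ∀ x, HasStrictDerivAt Q (c x)⁻¹ x := fun x => hci.integral_hasStrictDerivAt 0 x
  have Qmono : StrictMono Q := strictMono_of_hasDerivAt_pos (fun x => (dQ x).hasDerivAt)
    fun x => inv_pos.2 (hpos x)
  have cQ : Continuous Q := continuous_iff_continuousAt.2 fun x => (dQ x).hasDerivAt.continuousAt
  have Qlin : Monotone fun x => Q x - c1⁻¹ * x := by
    apply monotone_of_hasDerivAt_nonneg (f' := fun x => (c x)⁻¹ - c1⁻¹ * 1)
    · exact fun x => (dQ x).hasDerivAt.sub ((hasDerivAt_id x).const_mul _)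
    · intro x
      have := inv_anti₀ (hpos x) (hb x).2
      simpa using this
  have Q0 : Q 0 = 0 := by simp [hQ]
  have Qsurj : Surjective Q := by
    apply cQ.surjective
    · have : Tendsto (fun x : ℝ => c1⁻¹ * x) atTop atTop :=
        tendsto_id.const_mul_atTop (inv_pos.2 hc1)
      refine tendsto_atTop_mono' _ ?_ this
      filter_upwards [eventually_ge_atTop 0] with x hx
      have := Qlin hx
      simp only [Q0, mul_zero, sub_zero] at this
      linarith
    · have : Tendsto (fun x : ℝ => c1⁻¹ * x) atBot atBot :=
        tendsto_id.const_mul_atBot (inv_pos.2 hc1)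
      refine tendsto_atBot_mono' _ ?_ this
      filter_upwards [eventually_le_atBot 0] with x hx
      have := Qlin hx
      simp only [Q0, mul_zero, sub_zero] at this
      linarith
  set Φ := invFun Q with hΦ
  have hQΦ : ∀ τ, Q (Φ τ) = τ := rightInverse_invFun Qsurj
  have hΦQ : ∀ x, Φ (Q x) = x := leftInverse_invFun Qmono.injective
  have dΦ : ∀ τ, HasDerivAt Φ (c (Φ τ)) τ := by
    intro τ
    have := hasDerivAt_invFun dQ (fun x => (inv_pos.2 (hpos x)).ne') Qmono.injective (Φ τ)
    rwa [inv_inv, hQΦ] at this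
  have ds : ∀ s y, HasDerivAt (fun s => Φ (Q y - s)) (-c (Φ (Q y - s))) s := by
    intro s y
    have := (dΦ (Q y - s)).comp s ((hasDerivAt_id s).const_sub (Q y))
    exact this.congr_deriv (by simp)
  refine ⟨fun s y => Φ (Q y - s), fun y => by simp [hΦQ], ds, fun s y => ?_, fun s hs y => ?_⟩
  · have := (dΦ (Q y - s)).comp y ((dQ y).hasDerivAt.sub_const s)
    exact this
  · have h1 := le_initial_of_deriv_nonpos (t := s) (p := fun r => Φ (Q y - r) + c0 * r)
      (fun r _ => ((ds r y).add ((hasDerivAt_id r).const_mul c0)).hasDerivWithinAt)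
      (fun r _ => by linarith [(hb (Φ (Q y - r))).1]) s ⟨hs, le_rfl⟩
    have h2 := le_initial_of_deriv_nonpos (t := s) (p := fun r => -Φ (Q y - r) - c1 * r)
      (fun r _ => ((ds r y).neg.sub ((hasDerivAt_id r).const_mul c1)).hasDerivWithinAt)
      (fun r _ => by linarith [(hb (Φ (Q y - r))).2]) s ⟨hs, le_rfl⟩
    simp only [sub_zero, hΦQ, mul_zero, add_zero] at h1 h2
    constructor <;> linarith

lemma weight_le {κ x z : ℝ} (hκ : 0 ≤ κ) (h : |z - x| ≤ 1) :
    Real.exp (-(κ * max z 0)) ≤ Real.exp κ * Real.exp (-(κ * max x 0)) := by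
  rw [← Real.exp_add]
  apply Real.exp_le_exp.2
  have h1 := abs_le.1 h
  have : max x 0 ≤ max z 0 + 1 := by
    apply max_le
    · linarith [le_max_left z 0]
    · linarith [le_max_right z 0]
  nlinarith

/-- Mean value inequality for functions whose derivative is bounded by the weight. -/
lemma weighted_mvt {h : ℝ → ℝ} (hd : Differentiable ℝ h) {κ M : ℝ} (hκ : 0 ≤ κ) (hM : 0 ≤ M)
    (hb : ∀ x, |deriv h x| ≤ M * Real.exp (-(κ * max x 0))) {x z : ℝ} (hxz : |z - x| ≤ 1) :
    |h z - h x| ≤ M * Real.exp κ * Real.exp (-(κ * max x 0)) * |z - x| := by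
  have := (convex_uIcc x z).norm_image_sub_le_of_norm_deriv_le (f := h)
    (C := M * Real.exp κ * Real.exp (-(κ * max x 0)))
    (fun y _ => hd y) (fun y hy => ?_) left_mem_uIcc right_mem_uIcc
  · simpa [Real.norm_eq_abs] using this
  · refine (hb y).trans ?_
    rw [mul_assoc]
    exact mul_le_mul_of_nonneg_left
      (weight_le hκ ((abs_sub_left_of_mem_uIcc hy).trans hxz)) hM

/-- A perturbation of the front that is small in the weight is a small phase shift. -/
lemma exists_phase {ub : ℝ → ℝ} (hd : Differentiable ℝ ub) (hcd : Continuous (deriv ub))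
    (h0 : ∀ x, deriv ub x ≠ 0) {x W μ : ℝ} (hμ : 0 < μ)
    (hlow : ∀ z, |z - x| ≤ 1 → μ ≤ |deriv ub z|) (hW : |W| ≤ μ) :
    ∃ z, ub z = ub x + W ∧ |z - x| ≤ |W| / μ := by
  obtain ⟨ϵ, hϵ, hs⟩ := exists_sign hcd h0
  have hϵ2 : ϵ * ϵ = 1 := by rw [← abs_mul_abs_self, hϵ, one_mul]
  set r := |W| / μ with hr
  have hr0 : 0 ≤ r := by positivity
  have hr1 : r ≤ 1 := (div_le_one hμ).2 hW
  have hμr : μ * r = |W| := by rw [hr]; field_simp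
  have dv : ∀ z, HasDerivAt (fun z => ϵ * ub z) |deriv ub z| z := fun z => by
    have := (hd z).hasDerivAt.const_mul ϵ
    rwa [hs] at this
  have cv : Continuous fun z => ϵ * ub z := by
    have := hd.continuous
    fun_prop
  have hinc : ∀ p q, x - 1 ≤ p → p ≤ q → q ≤ x + 1 → μ * (q - p) ≤ ϵ * ub q - ϵ * ub p := by
    intro p q hp hpq hq
    refine (convex_Icc (x - 1) (x + 1)).mul_sub_le_image_sub_of_le_deriv
      (f := fun z => ϵ * ub z) cv.continuousOn
      (fun z _ => (dv z).differentiableAt.differentiableWithinAt)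
      (fun z hz => ?_) p ⟨hp, hpq.trans hq⟩ q ⟨hp.trans hpq, hq⟩ hpq
    rw [interior_Icc] at hz
    rw [(dv z).deriv]
    exact hlow z (abs_le.2 ⟨by linarith [hz.1], by linarith [hz.2]⟩)
  have i1 := hinc x (x + r) (by linarith) (by linarith) (by linarith)
  have i2 := hinc (x - r) x (by linarith) (by linarith) (by linarith)
  have hϵW : |ϵ * W| = |W| := by rw [abs_mul, hϵ, one_mul]
  have hW' := abs_le.1 hϵW.le
  obtain ⟨z, hz, hzz⟩ := intermediate_value_Icc (show x - r ≤ x + r by linarith)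
    cv.continuousOn (show ϵ * ub x + ϵ * W ∈ Icc (ϵ * ub (x - r)) (ϵ * ub (x + r)) by
      constructor <;> nlinarith)
  refine ⟨z, ?_, abs_le.2 ⟨by linarith [hz.1], by linarith [hz.2]⟩⟩
  have : ϵ * (ϵ * ub z) = ϵ * (ϵ * ub x + ϵ * W) := by
    simp only at hzz
    rw [hzz]
  rw [← mul_assoc, hϵ2, one_mul] at this
  rw [this, mul_add, ← mul_assoc, ← mul_assoc, hϵ2, one_mul, one_mul]

/-- Slope of the transported solution where the datum is a phase shift `η` of the front:
positions are `Z ∘ η - (η - id)`, values `ub ∘ Z ∘ η`, and the chain rule applies. -/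
lemma right_deriv {ub Z η p V : ℝ → ℝ} {a k k0 η' V' U' : ℝ}
    (hη : HasDerivAt η η' a) (hZ : HasDerivAt Z k (η a))
    (hp : p =ᶠ[nhds a] fun b => Z (η b) - (η b - b))
    (hVp : (fun b => V (p b)) =ᶠ[nhds a] fun b => ub (Z (η b)))
    (hV : HasDerivAt V V' (p a)) (hub : HasDerivAt ub U' (Z (η a)))
    (hk0 : 0 < k0) (hk01 : k0 ≤ 1) (hk : k0 ≤ k) (hη' : |η' - 1| ≤ k0 / 4) :
    |V' - U'| ≤ |U'| * (2 / k0 * |η' - 1|) ∧ ContinuousAt p a := by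
  have dp : HasDerivAt p (k * η' - (η' - 1)) a :=
    ((hZ.comp a hη).sub (hη.sub (hasDerivAt_id a))).congr_of_eventuallyEq hp
  refine ⟨?_, dp.continuousAt⟩
  have d1 : HasDerivAt (fun b => V (p b)) (V' * (k * η' - (η' - 1))) a := hV.comp a dp
  have d2 : HasDerivAt (fun b => V (p b)) (U' * (k * η')) a :=
    (hub.comp a (hZ.comp a hη)).congr_of_eventuallyEq hVp
  have e := d1.unique d2
  have h1 := abs_le.1 hη'
  set D := k * η' - (η' - 1) with hD
  have hDl : k0 / 2 ≤ D := by
    have : k0 * (1 - k0 / 4) ≤ k * η' := by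
      apply mul_le_mul hk <;> nlinarith
    nlinarith
  have hDpos : 0 < D := by linarith
  have e2 : V' - U' = U' * ((η' - 1) / D) := by
    field_simp
    rw [hD] at e ⊢
    linarith
  rw [e2, abs_mul, abs_div, abs_of_pos hDpos]
  apply mul_le_mul_of_nonneg_left _ (abs_nonneg _)
  rw [div_mul_eq_mul_div, div_le_div_iff₀ hDpos hk0]
  nlinarith [abs_nonneg (η' - 1)]

/-- Slope of the transported solution where values contract and positions barely drift. -/
lemma left_deriv {u0 p V : ℝ → ℝ} {a d θ K e V' : ℝ} (hu0 : HasDerivAt u0 d a) (hd : |d| < θ)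
    (hK : 0 ≤ K) (hKθ : K * θ ≤ 1 / 2) (he : 0 ≤ e)
    (hV : HasDerivAt V V' (p a))
    (h1 : ∀ᶠ b in nhds a, |V (p b) - V (p a)| ≤ e * |u0 b - u0 a| ∧
      |(p b - p a) - (b - a)| ≤ K * |u0 b - u0 a|) :
    |V'| ≤ 2 * θ * e ∧ ContinuousAt p a := by
  have hθ : 0 < θ := (abs_nonneg d).trans_lt hd
  have hlip : ∀ᶠ b in nhds a, |u0 b - u0 a| ≤ θ * |b - a| := by
    have := hu0.isLittleO.def (sub_pos.2 hd)
    filter_upwards [this] with b hb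
    rw [smul_eq_mul, Real.norm_eq_abs, Real.norm_eq_abs] at hb
    have h2 : |u0 b - u0 a| ≤ |u0 b - u0 a - (b - a) * d| + |(b - a) * d| := by
      have := abs_add_le (u0 b - u0 a - (b - a) * d) ((b - a) * d)
      simpa using this
    rw [abs_mul] at h2
    nlinarith
  have hdrift : ∀ᶠ b in nhds a, |(p b - p a) - (b - a)| ≤ 1 / 2 * |b - a| := by
    filter_upwards [h1, hlip] with b hb hb'
    have := mul_le_mul_of_nonneg_left hb' hK
    nlinarith [abs_nonneg (b - a), hb.2]
  have hcont : ContinuousAt p a := by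
    rw [ContinuousAt, tendsto_iff_norm_sub_tendsto_zero]
    have hz : Tendsto (fun b => 2 * |b - a|) (nhds a) (nhds 0) := by
      have : Continuous fun b : ℝ => 2 * |b - a| := by fun_prop
      simpa using this.tendsto a
    refine squeeze_zero' (Eventually.of_forall fun b => norm_nonneg _) ?_ hz
    filter_upwards [hdrift] with b hb
    rw [Real.norm_eq_abs]
    have := abs_add_le ((p b - p a) - (b - a)) (b - a)
    rw [sub_add_cancel] at this
    linarith [abs_nonneg (b - a)]
  refine ⟨?_, hcont⟩
  have hexp : ∀ᶠ b in nhds a, 1 / 2 * |b - a| ≤ |p b - p a| := by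
    filter_upwards [hdrift] with b hb
    have := abs_sub_abs_le_abs_sub (b - a) (p b - p a)
    rw [abs_sub_comm (b - a)] at this
    linarith
  have hne : Tendsto p (nhdsWithin a {a}ᶜ) (nhdsWithin (p a) {p a}ᶜ) := by
    apply tendsto_nhdsWithin_of_tendsto_nhds_of_eventually_within _
      (hcont.tendsto.mono_left nhdsWithin_le_nhds)
    filter_upwards [hexp.filter_mono nhdsWithin_le_nhds, self_mem_nhdsWithin] with b hb hba hpb
    have : |p b - p a| = 0 := by rw [mem_singleton_iff.1 hpb]; simp
    have : 0 < |b - a| := abs_pos.2 (sub_ne_zero.2 hba)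
    linarith
  have hs := ((hasDerivAt_iff_tendsto_slope.1 hV).comp hne).abs
  refine le_of_tendsto hs ?_
  filter_upwards [hexp.filter_mono nhdsWithin_le_nhds, h1.filter_mono nhdsWithin_le_nhds,
    hlip.filter_mono nhdsWithin_le_nhds, self_mem_nhdsWithin] with b b1 b2 b3 hba
  have hb : 0 < |b - a| := abs_pos.2 (sub_ne_zero.2 hba)
  have hp : 0 < |p b - p a| := by linarith
  simp only [comp_apply, slope_def_field]
  rw [abs_div, div_le_iff₀ hp]
  have := mul_le_mul_of_nonneg_left b3 he
  have h5 : 0 ≤ θ * e := by positivity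
  nlinarith [b2.1]

lemma surjective_of_dist_le {p : ℝ → ℝ} (hp : Continuous p) {K : ℝ} (h : ∀ b, |p b - b| ≤ K) :
    Surjective p := by
  apply hp.surjective
  · refine tendsto_atTop_mono (fun b => ?_) (tendsto_atTop_add_const_right atTop (-K) tendsto_id)
    simp only [id]
    linarith [(abs_le.1 (h b)).1]
  · refine tendsto_atBot_mono (fun b => ?_) (tendsto_atBot_add_const_right atBot K tendsto_id)
    simp only [id]
    linarith [(abs_le.1 (h b)).2]

/-! ### Transported perturbations ahead of and behind the front -/

/-- Ahead of a fixed position, a small weighted perturbation is a small phase shift `s` of the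
front.  Characteristics conserve `s`, so it still measures the perturbation at time `t`.  Here `p`
is the foot-to-position map at time `t` and `V` the solution in the moving frame. -/
lemma right_region {f g ub : ℝ → ℝ} {σ κ : ℝ} (hf : ContDiff ℝ (⊤ : ℕ∞) f)
    (hub : ContDiff ℝ (⊤ : ℕ∞) ub) (hub' : ∀ x, deriv ub x ≠ 0)
    (hprof : ∀ x, (deriv f (ub x) - σ) * deriv ub x = g (ub x))
    (F : FrontBounds f σ ub κ) (hκ : 0 ≤ κ) (R : ℝ) :
    ∃ δ > 0, ∃ C ≥ 0, ∃ c0 > 0, ∃ c1, ∀ (u0 : ℝ → ℝ) (a N t : ℝ) (p V : ℝ → ℝ),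
      ContDiff ℝ 1 u0 → -R ≤ a → N ≤ δ →
      |u0 a - ub a| ≤ N * Real.exp (-(κ * max a 0)) →
      |deriv u0 a - deriv ub a| ≤ N * Real.exp (-(κ * max a 0)) → 0 ≤ t → Differentiable ℝ V →
      (∀ b X U, IsChar f g σ t b (u0 b) X U → X = p b ∧ V X = U) →
      ContinuousAt p a ∧ a - c1 * t ≤ p a ∧ p a ≤ a - c0 * t ∧
      ∃ s, |s| ≤ C * N ∧ |s| ≤ 1 ∧ C * N ≤ 1 ∧ V (p a) = ub (p a + s) ∧
        |deriv V (p a) - deriv ub (p a + s)| ≤ |deriv ub (p a + s)| * (C * N) := by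
  obtain ⟨c0, hc0, c1, hc1, hsp⟩ := F.speed
  obtain ⟨M, hM, hup⟩ := F.upper
  obtain ⟨m, hm, hlow⟩ := F.lower (R + 1)
  have hub2 : ContDiff ℝ 2 ub := contDiff_two_of_smooth hub
  have hub1 : ContDiff ℝ 1 (deriv ub) := contDiff_one_deriv hub2
  have hdub : Differentiable ℝ ub := hub2.differentiable (by norm_num)
  have hcd : Continuous (deriv ub) := hub1.continuous
  have hstrict : ∀ x, HasStrictDerivAt ub (deriv ub x) x := fun x =>
    hub2.contDiffAt.hasStrictDerivAt (by norm_num)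
  have hinj : Injective ub := by
    obtain ⟨ϵ, hϵ, hs⟩ := exists_sign hcd hub'
    have : StrictMono fun x => ϵ * ub x := strictMono_of_hasDerivAt_pos
      (fun x => (hdub x).hasDerivAt.const_mul ϵ) fun x => by
        rw [hs]
        exact abs_pos.2 (hub' x)
    intro x y hxy
    exact this.injective (by simp only [hxy])
  have hopen : IsOpenMap ub := isOpenMap_of_hasStrictDerivAt hstrict hub'
  have hcf : Continuous fun x => σ - deriv f (ub x) :=
    continuous_const.sub
      ((contDiff_one_deriv (contDiff_two_of_smooth hf)).continuous.comp hdub.continuous)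
  obtain ⟨Y, hY0, hYs, hYy, hYb⟩ := exists_flow hcf hc0 hsp
  set m1 := m * Real.exp (-κ) with hm1
  have hm1p : 0 < m1 := by positivity
  have hlow1 : ∀ a z, -R ≤ a → |z - a| ≤ 1 →
      m1 * Real.exp (-(κ * max a 0)) ≤ |deriv ub z| := by
    intro a z ha hz
    refine le_trans ?_ (hlow z (by linarith [(abs_le.1 hz).1]))
    have := weight_le hκ ((abs_sub_comm a z).trans_le hz)
    rw [hm1, mul_assoc]
    refine mul_le_mul_of_nonneg_left ?_ hm.le
    calc Real.exp (-κ) * Real.exp (-(κ * max a 0))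
        ≤ Real.exp (-κ) * (Real.exp κ * Real.exp (-(κ * max z 0))) :=
          mul_le_mul_of_nonneg_left this (Real.exp_pos _).le
      _ = Real.exp (-(κ * max z 0)) := by
          rw [← mul_assoc, ← Real.exp_add]
          simp
  have hc01 : c0 ≤ c1 := (hsp 0).1.trans (hsp 0).2
  set k0 := c0 / c1 with hk0
  have hk0p : 0 < k0 := by positivity
  have hk01 : k0 ≤ 1 := (div_le_one hc1).2 hc01
  set Cs := 1 / m1 with hCs
  have hCsp : 0 < Cs := by positivity
  set C2 := (1 + M * Real.exp κ * Cs) / m1 with hC2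
  have hC2p : 0 < C2 := by positivity
  set C := Cs + 2 / k0 * C2 with hC
  have hCp : 0 < C := by positivity
  set δ := min (1 / C) (k0 / (4 * C2)) with hδ
  refine ⟨δ, by positivity, C, hCp.le, c0, hc0, c1, ?_⟩
  intro u0 a N t p V hu0 ha hNδ hw hw' ht hVd hp
  set Ω := Real.exp (-(κ * max a 0)) with hΩ
  have hΩp : 0 < Ω := Real.exp_pos _
  have hN0 : 0 ≤ N := by
    by_contra! h
    have := (abs_nonneg _).trans hw
    nlinarith
  have hCN : C * N ≤ 1 := by
    have := hNδ.trans (min_le_left _ _)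
    rw [le_div_iff₀ hCp] at this
    linarith
  have hC2N : C2 * N ≤ k0 / 4 := by
    have := hNδ.trans (min_le_right _ _)
    rw [le_div_iff₀ (by positivity)] at this
    linarith
  have hCsN : Cs * N ≤ C * N := by
    apply mul_le_mul_of_nonneg_right _ hN0
    rw [hC]
    have : 0 < 2 / k0 * C2 := by positivity
    linarith
  have hm1N : N ≤ m1 := by
    have : Cs * N ≤ 1 := hCsN.trans hCN
    rw [hCs, one_div_mul_eq_div, div_le_one hm1p] at this
    exact this
  obtain ⟨z, hz, hza⟩ := exists_phase hdub hcd hub' (x := a) (W := u0 a - ub a)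
    (μ := m1 * Ω) (by positivity) (fun z hz => hlow1 a z ha hz)
    (hw.trans (mul_le_mul_of_nonneg_right hm1N hΩp.le))
  rw [add_sub_cancel] at hz
  have hza' : |z - a| ≤ Cs * N := by
    refine hza.trans ?_
    rw [div_le_iff₀ (by positivity)]
    refine hw.trans (le_of_eq ?_)
    rw [hCs]
    field_simp
  have hza1 : |z - a| ≤ 1 := hza'.trans (hCsN.trans hCN)
  set η : ℝ → ℝ := fun b => invFun ub (u0 b) with hη
  have hηa : η a = z := by
    simp only [hη, ← hz]
    exact leftInverse_invFun hinj z
  have hu0a : HasDerivAt u0 (deriv u0 a) a :=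
    (hu0.differentiable (by norm_num) a).hasDerivAt
  have hηev : ∀ᶠ b in nhds a, ub (η b) = u0 b := by
    have : range ub ∈ nhds (u0 a) := hopen.isOpen_range.mem_nhds ⟨z, hz⟩
    filter_upwards [hu0a.continuousAt this] with b hb
    exact invFun_eq hb
  have hηd : HasDerivAt η ((deriv ub z)⁻¹ * deriv u0 a) a := by
    have h1 := hasDerivAt_invFun hstrict hub' hinj z
    rw [hz] at h1
    exact h1.comp a hu0a
  have hη1 : |(deriv ub z)⁻¹ * deriv u0 a - 1| ≤ C2 * N := by
    have hzp : 0 < |deriv ub z| := abs_pos.2 (hub' z)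
    have e : (deriv ub z)⁻¹ * deriv u0 a - 1 = (deriv u0 a - deriv ub z) / deriv ub z := by
      have := hub' z
      field_simp
    rw [e, abs_div, div_le_iff₀ hzp]
    have h1 := weighted_mvt (hub1.differentiable (by norm_num)) hκ hM.le
      (fun x => (hup x).2) hza1
    have h2 := abs_sub_le (deriv u0 a) (deriv ub a) (deriv ub z)
    rw [abs_sub_comm (deriv ub a)] at h2
    have h3 := mul_le_mul_of_nonneg_left hza'
      (show 0 ≤ M * Real.exp κ * Real.exp (-(κ * max a 0)) by positivity)
    have h4 := mul_le_mul_of_nonneg_left (hlow1 a z ha hza1)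
      (show 0 ≤ C2 * N by positivity)
    have h5 : C2 * N * (m1 * Real.exp (-(κ * max a 0)))
        = N * Ω + M * Real.exp κ * Real.exp (-(κ * max a 0)) * (Cs * N) := by
      rw [hC2, ← hΩ]
      field_simp
    linarith
  -- translates of the front are transported along themselves, by `Y`
  have hchar : ∀ b, ub (η b) = u0 b →
      IsChar f g σ t b (u0 b) (Y t (η b) - (η b - b)) (ub (Y t (η b))) := by
    intro b hb
    refine ⟨fun s => Y s (η b) - (η b - b), fun s => ub (Y s (η b)), fun s _ => ?_,
      fun s _ => ?_, ?_, ?_, rfl, rfl⟩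
    · exact (((hYs s (η b)).sub_const (η b - b)).congr_deriv (by ring)).hasDerivWithinAt
    · have := (hdub (Y s (η b))).hasDerivAt.comp s (hYs s (η b))
      refine (this.congr_deriv ?_).hasDerivWithinAt
      rw [← hprof]
      ring
    · simp [hY0]
    · simp [hY0, hb]
  have hpe : p =ᶠ[nhds a] fun b => Y t (η b) - (η b - b) := by
    filter_upwards [hηev] with b hb
    exact (hp b _ _ (hchar b hb)).1.symm
  have hVpe : (fun b => V (p b)) =ᶠ[nhds a] fun b => ub (Y t (η b)) := by
    filter_upwards [hηev] with b hb
    obtain ⟨h1, h2⟩ := hp b _ _ (hchar b hb)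
    rw [← h1, h2]
  have hk : k0 ≤ (σ - deriv f (ub (Y t (η a)))) / (σ - deriv f (ub (η a))) := by
    have h1 := hsp (Y t (η a))
    have h2 := hsp (η a)
    exact div_le_div₀ (by linarith) h1.1 (by linarith) h2.2
  obtain ⟨r1, r2⟩ := right_deriv hηd (hYy t (η a)) hpe hVpe (hVd (p a)).hasDerivAt
    (hdub _).hasDerivAt hk0p hk01 hk (hη1.trans hC2N)
  have hpa : p a = Y t z - (z - a) := by
    have := hpe.self_of_nhds
    simpa only [hηa] using this
  have hVpa : V (p a) = ub (Y t z) := by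
    have := hVpe.self_of_nhds
    simpa only [hηa] using this
  have hYz := hYb t ht z
  have hps : p a + (z - a) = Y t z := by rw [hpa]; ring
  refine ⟨r2, by rw [hpa]; linarith, by rw [hpa]; linarith, z - a, hza'.trans hCsN, hza1, hCN,
    ?_, ?_⟩
  · rw [hps, hVpa]
  · rw [hps]
    rw [hηa] at r1
    refine r1.trans (mul_le_mul_of_nonneg_left ?_ (abs_nonneg _))
    have h1 := mul_le_mul_of_nonneg_left hη1 (show 0 ≤ 2 / k0 by positivity)
    have h2 : 0 ≤ Cs * N := by positivity
    rw [hC]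
    nlinarith

/-- Behind a fixed position, values lie in the basin of the stable state `um` and relax to it
exponentially, while characteristics drift to `-∞`. -/
lemma left_region {f g ub : ℝ → ℝ} {σ um : ℝ} (hf : ContDiff ℝ (⊤ : ℕ∞) f)
    (hg : ContDiff ℝ (⊤ : ℕ∞) g) (hlm : Tendsto ub atBot (nhds um))
    (hdlm : Tendsto (deriv ub) atBot (nhds 0)) (hgum : g um = 0) (hg'um : deriv g um < 0)
    (hfum : deriv f um < σ) :
    ∃ R, ∃ δ > 0, ∃ C > 0, ∃ l > 0, ∃ c0 > 0, ∃ c1, ∀ (u0 : ℝ → ℝ) (a t : ℝ) (p V : ℝ → ℝ),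
      ContDiff ℝ 1 u0 → a ≤ -R → |u0 a - ub a| ≤ δ → |deriv u0 a - deriv ub a| ≤ δ →
      0 ≤ t → Differentiable ℝ V →
      (∀ b X U, IsChar f g σ t b (u0 b) X U → X = p b ∧ V X = U) →
      ContinuousAt p a ∧ a - c1 * t ≤ p a ∧ p a ≤ a - c0 * t ∧
      |V (p a) - um| ≤ C * Real.exp (-(l * t)) ∧ |deriv V (p a)| ≤ C * Real.exp (-(l * t)) := by
  have hf2 := contDiff_two_of_smooth hf
  have hg2 := contDiff_two_of_smooth hg
  have hf1 := contDiff_one_deriv hf2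
  have hg1 : ContDiff ℝ 1 g := hg2.of_le (by norm_num)
  have hgd : Differentiable ℝ g := hg1.differentiable (by norm_num)
  have hg'c : Continuous (deriv g) := (contDiff_one_deriv hg2).continuous
  set l := -deriv g um / 2 with hl
  have hlp : 0 < l := by rw [hl]; linarith
  set c0 := (σ - deriv f um) / 2 with hc0
  have hc0p : 0 < c0 := by rw [hc0]; linarith
  have e1 : ∀ᶠ U in nhds um, deriv g U < -l :=
    hg'c.continuousAt.eventually_lt continuousAt_const (by rw [hl]; linarith)
  have e2 : ∀ᶠ U in nhds um, deriv f U < σ - c0 :=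
    hf1.continuous.continuousAt.eventually_lt continuousAt_const (by rw [hc0]; linarith)
  have e3 : ∀ᶠ U in nhds um, deriv f um - 1 < deriv f U :=
    continuousAt_const.eventually_lt hf1.continuous.continuousAt (by linarith)
  obtain ⟨ε1, hε1, hball⟩ := Metric.nhds_basis_closedBall.eventually_iff.1
    (e1.and (e2.and e3))
  rw [Real.closedBall_eq_Icc] at hball
  set c1 := σ - deriv f um + 1 with hc1
  set I := Icc (um - ε1) (um + ε1) with hI
  have humI : um ∈ I := ⟨by linarith, by linarith⟩
  have hdis : ∀ a ∈ I, ∀ b ∈ I, (a - b) * (g a - g b) ≤ -l * (a - b) ^ 2 := by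
    have key : ∀ a ∈ I, ∀ b ∈ I, a ≤ b → g b - g a ≤ -l * (b - a) := fun a ha b hb hab =>
      (convex_Icc _ _).image_sub_le_mul_sub_of_deriv_le hgd.continuous.continuousOn
        hgd.differentiableOn (fun x hx => (hball (interior_subset hx)).1.le) a ha b hb hab
    intro a ha b hb
    rcases le_total a b with h | h
    · have := key a ha b hb h
      nlinarith
    · have := key b hb a ha h
      nlinarith
  obtain ⟨L, hL0, hL⟩ := exists_lip hf1 (um - ε1) (um + ε1)
  set K := L / l with hK
  have hK0 : 0 ≤ K := by positivity
  set θ := 1 / (2 * (K + 1)) with hθ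
  have hθp : 0 < θ := by positivity
  have hKθ : K * θ ≤ 1 / 2 := by
    rw [hθ, mul_one_div, div_le_iff₀ (by positivity)]
    linarith
  have e4 : ∀ᶠ x in atBot, |ub x - um| < ε1 / 2 := by
    have := hlm.eventually (Metric.ball_mem_nhds um (half_pos hε1))
    simpa [Real.dist_eq] using this
  have e5 : ∀ᶠ x in atBot, |deriv ub x| < θ / 2 := by
    have := hdlm.eventually (Metric.ball_mem_nhds 0 (half_pos hθp))
    simpa [Real.dist_eq] using this
  obtain ⟨R, hR⟩ := eventually_atBot.1 (e4.and e5)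
  set C := 2 * θ + ε1 with hC
  refine ⟨-R, min (ε1 / 4) (θ / 4), by positivity, C, by positivity, l, hlp, c0, hc0p, c1, ?_⟩
  intro u0 a t p V hu0 ha hw hw' ht hVd hp
  rw [neg_neg] at ha
  obtain ⟨r1, r2⟩ := hR a ha
  have hwa := hw.trans (min_le_left _ _)
  have hwa' := hw'.trans (min_le_right _ _)
  have hUa : |u0 a - um| < ε1 := by
    have := abs_sub_le (u0 a) (ub a) um
    linarith
  have hda : |deriv u0 a| < θ := by
    have := abs_sub_abs_le_abs_sub (deriv u0 a) (deriv ub a)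
    linarith
  have hu0a : HasDerivAt u0 (deriv u0 a) a :=
    (hu0.differentiable (by norm_num) a).hasDerivAt
  have hmem : ∀ {U : ℝ}, |U - um| < ε1 → U ∈ I := fun {U} h => by
    have := abs_lt.1 h
    exact ⟨by linarith, by linarith⟩
  have hev : ∀ᶠ b in nhds a, u0 b ∈ I := by
    have : ContinuousAt (fun b => |u0 b - um|) a := (hu0a.continuousAt.sub_const um).abs
    filter_upwards [this.eventually_lt continuousAt_const hUa] with b hb using hmem hb
  have htt : t ∈ Icc 0 t := ⟨ht, le_rfl⟩
  obtain ⟨x, y, hx, hy, hx0, hy0, hyI⟩ :=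
    exists_stable_traj hf2 hg1 hε1 hlp.le hgum hdis σ ht a (u0 a) (hmem hUa)
  obtain ⟨hpa, hVa⟩ := hp a (x t) (y t) ⟨x, y, hx, hy, hx0, hy0, rfl, rfl⟩
  obtain ⟨x', y', hx', hy', hx0', hy0', hyI'⟩ :=
    exists_stable_traj hf2 hg1 hε1 hlp.le hgum hdis σ ht a um humI
  have hcmp : ∀ᶠ b in nhds a, |V (p b) - V (p a)| ≤ Real.exp (-(l * t)) * |u0 b - u0 a| ∧
      |(p b - p a) - (b - a)| ≤ K * |u0 b - u0 a| := by
    filter_upwards [hev] with b hb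
    obtain ⟨xb, yb, hxb, hyb, hxb0, hyb0, hybI⟩ :=
      exists_stable_traj hf2 hg1 hε1 hlp.le hgum hdis σ ht b (u0 b) hb
    obtain ⟨hpb, hVb⟩ := hp b (xb t) (yb t) ⟨xb, yb, hxb, hyb, hxb0, hyb0, rfl, rfl⟩
    have := stable_traj_contract hlp hL0 hdis hL hxb hyb hybI hx hy hyI t htt
    rw [hyb0, hy0, hxb0, hx0] at this
    rw [← hpb, ← hpa, hVb, hVa]
    exact this
  obtain ⟨hV', hcont⟩ := left_deriv hu0a hda hK0 hKθ (Real.exp_pos _).le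
    (hVd (p a)).hasDerivAt hcmp
  -- the constant state `um` is the value carried by the comparison trajectory
  have hy'um : ∀ s ∈ Icc 0 t, y' s = um := by
    have hc : ∀ s ∈ Icc 0 t, HasDerivWithinAt (fun _ : ℝ => um) (g um) (Icc 0 t) s := fun s _ => by
      rw [hgum]
      exact hasDerivWithinAt_const _ _ _
    have hx'' : ∀ s ∈ Icc 0 t,
        HasDerivWithinAt (fun s => a + (deriv f um - σ) * s) (deriv f um - σ) (Icc 0 t) s :=
      fun s _ => by
        have := ((hasDerivAt_id s).const_mul (deriv f um - σ)).const_add a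
        exact (this.congr_deriv (by simp)).hasDerivWithinAt
    intro s hs
    have := (stable_traj_contract hlp hL0 hdis hL hx' hy' hyI' hx'' hc (fun _ _ => humI) s hs).1
    rw [hy0', sub_self, abs_zero, mul_zero] at this
    linarith [abs_nonpos_iff.1 this]
  have hVum : |V (p a) - um| ≤ Real.exp (-(l * t)) * ε1 := by
    have := (stable_traj_contract hlp hL0 hdis hL hx hy hyI hx' hy' hyI' t htt).1
    rw [hy'um t htt, hy0, hy0'] at this
    rw [← hpa, hVa]
    exact this.trans (mul_le_mul_of_nonneg_left hUa.le (Real.exp_pos _).le)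
  have b1 := le_initial_of_deriv_nonpos (p := fun s => x s + c0 * s)
    (p' := fun s => deriv f (y s) - σ + c0 * 1)
    (fun s hs => (hx s hs).add ((hasDerivAt_id s).const_mul c0).hasDerivWithinAt)
    (fun s hs => by linarith [(hball (hyI s hs)).2.1]) t htt
  have b2 := le_initial_of_deriv_nonpos (p := fun s => -x s - c1 * s)
    (p' := fun s => -(deriv f (y s) - σ) - c1 * 1)
    (fun s hs => (hx s hs).neg.sub ((hasDerivAt_id s).const_mul c1).hasDerivWithinAt)
    (fun s hs => by linarith [(hball (hyI s hs)).2.2]) t htt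
  simp only [mul_zero, add_zero, sub_zero, hx0] at b1 b2
  have hexp := Real.exp_pos (-(l * t))
  refine ⟨hcont, by rw [← hpa]; linarith, by rw [← hpa]; linarith, ?_, ?_⟩
  · rw [hC]
    nlinarith
  · rw [hC]
    nlinarith

/-! ### Weighted estimates and convergence -/

/-- Near `+∞` the front and its slope vary on the scale of the weight, so a phase shift `s` costs
at most a multiple of `n ≥ |s|` in the weighted norm. -/
lemma shift_estimate {ub : ℝ → ℝ} {κ M : ℝ} (hub : ContDiff ℝ (⊤ : ℕ∞) ub) (hκ : 0 ≤ κ)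
    (hM : 0 ≤ M) (hup : ∀ x, |deriv ub x| ≤ M * Real.exp (-(κ * max x 0)) ∧
      |deriv (deriv ub) x| ≤ M * Real.exp (-(κ * max x 0)))
    {x s n V0 V1 : ℝ} (hs1 : |s| ≤ 1) (hsn : |s| ≤ n) (h0 : V0 = ub (x + s))
    (h1 : |V1 - deriv ub (x + s)| ≤ |deriv ub (x + s)| * n) :
    max |V0 - ub x| |V1 - deriv ub x| / Real.exp (-(κ * max x 0)) ≤ 2 * (M * Real.exp κ) * n := by
  have hub2 := contDiff_two_of_smooth hub
  have hn : 0 ≤ n := (abs_nonneg s).trans hsn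
  have hxs : |x + s - x| ≤ 1 := by rwa [add_sub_cancel_left]
  have e0 := weighted_mvt (hub2.differentiable (by norm_num)) hκ hM (fun x => (hup x).1) hxs
  have e1 := weighted_mvt ((contDiff_one_deriv hub2).differentiable (by norm_num)) hκ hM
    (fun x => (hup x).2) hxs
  rw [add_sub_cancel_left] at e0 e1
  have e2 := (hup (x + s)).1.trans (mul_le_mul_of_nonneg_left (weight_le hκ hxs) hM)
  rw [← mul_assoc] at e2
  have hE : 0 ≤ M * Real.exp κ * Real.exp (-(κ * max x 0)) := by positivity
  have e3 := mul_le_mul_of_nonneg_left hsn hE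
  have e4 := mul_le_mul_of_nonneg_right e2 hn
  have e5 : 0 ≤ M * Real.exp κ * Real.exp (-(κ * max x 0)) * n := mul_nonneg hE hn
  rw [div_le_iff₀ (Real.exp_pos _)]
  apply max_le
  · rw [h0]
    linarith
  · have := abs_sub_le V1 (deriv ub (x + s)) (deriv ub x)
    linarith

/-- The pointwise weighted size of a datum at the critical weight, controlled and vanishing at
`+∞`. -/
lemma datum_bounds {κ δ : ℝ} {w : ℝ → ℝ}
    (hb : ∃ M, ∀ x, |w x / Real.exp (-(κ * max x 0))| ≤ M)
    (hb' : ∃ M, ∀ x, |deriv w x / Real.exp (-(κ * max x 0))| ≤ M)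
    (hE : wNorm κ w ≤ δ) (h : Tendsto (fun x => Real.exp (κ * x) * w x) atTop (nhds 0))
    (h' : Tendsto (fun x => Real.exp (κ * x) * deriv w x) atTop (nhds 0)) :
    ∃ N : ℝ → ℝ, Tendsto N atTop (nhds 0) ∧ ∀ x, N x ≤ δ ∧
      |w x| ≤ N x * Real.exp (-(κ * max x 0)) ∧
      |deriv w x| ≤ N x * Real.exp (-(κ * max x 0)) := by
  have hdiv : ∀ x, max |w x| |deriv w x| / Real.exp (-(κ * max x 0)) =
      max |w x / Real.exp (-(κ * max x 0))| |deriv w x / Real.exp (-(κ * max x 0))| := by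
    intro x
    rw [abs_div, abs_div, abs_of_pos (Real.exp_pos _), max_div_div_right (Real.exp_pos _).le]
  obtain ⟨M, hM⟩ := hb
  obtain ⟨M', hM'⟩ := hb'
  have hbdd : BddAbove (range fun x => max |w x| |deriv w x| / Real.exp (-(κ * max x 0))) := by
    refine ⟨max M M', ?_⟩
    rintro _ ⟨x, rfl⟩
    simp only [hdiv]
    exact max_le_max (hM x) (hM' x)
  refine ⟨_, ?_, fun x => ⟨(le_ciSup hbdd x).trans hE, ?_, ?_⟩⟩
  · have := h.abs.max h'.abs
    rw [abs_zero, max_self] at this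
    refine this.congr' ?_
    filter_upwards [eventually_ge_atTop 0] with x hx
    rw [hdiv, max_eq_left hx, Real.exp_neg, div_inv_eq_mul, div_inv_eq_mul, mul_comm (w x),
      mul_comm (deriv w x)]
  · rw [div_mul_cancel₀ _ (Real.exp_pos _).ne']
    exact le_max_left _ _
  · rw [div_mul_cancel₀ _ (Real.exp_pos _).ne']
    exact le_max_right _ _

/-- **Rate-less asymptotic convective stability of smooth non-characteristic monostable
fronts at the critical exponential weight** (Theorem "fronts", part 1): if moreover
`e^{κ⁺x}(u₀−ū)(x) → 0` and `e^{κ⁺x}(u₀−ū)'(x) → 0` as `x → +∞`, then the perturbation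
tends to `0` in `W^{1,∞}_{κ⁺,+}` as `t → +∞`. -/
theorem stmt_3
    (f g : ℝ → ℝ) (hf : ContDiff ℝ (⊤ : ℕ∞) f) (hg : ContDiff ℝ (⊤ : ℕ∞) g)
    (σ : ℝ) (ub : ℝ → ℝ) (hub : ContDiff ℝ (⊤ : ℕ∞) ub)
    (hubbd : ∃ M, ∀ x, |ub x| ≤ M)
    (hub' : ∀ x, deriv ub x ≠ 0)
    (hnc : ∀ x, deriv f (ub x) ≠ σ)
    (hprof : ∀ x, (deriv f (ub x) - σ) * deriv ub x = g (ub x))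
    (um up : ℝ)
    (hlm : Tendsto ub atBot (nhds um)) (hlp : Tendsto ub atTop (nhds up))
    (hgum : g um = 0) (hgup : g up = 0)
    (hg'um : deriv g um < 0) (hg'up : 0 < deriv g up)
    (hfum : deriv f um ≠ σ) (hfup : deriv f up ≠ σ)
    (κp : ℝ) (hκp : κp = deriv g up / |deriv f up - σ|) :
    ∃ δ0 > (0:ℝ), ∀ u0 : ℝ → ℝ, ContDiff ℝ 1 u0 →
      IsBUC (fun x => (u0 x - ub x) / Real.exp (-(κp * max x 0))) →
      IsBUC (fun x => deriv (fun y => u0 y - ub y) x / Real.exp (-(κp * max x 0))) →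
      wNorm κp (fun x => u0 x - ub x) ≤ δ0 →
      Tendsto (fun x => Real.exp (κp * x) * (u0 x - ub x)) atTop (nhds 0) →
      Tendsto (fun x => Real.exp (κp * x) * deriv (fun y => u0 y - ub y) x) atTop (nhds 0) →
      ∀ u : ℝ → ℝ → ℝ, IsClassicalSol f g u0 u →
        Tendsto (fun t => wNorm κp (fun x => u t (x + σ * t) - ub x)) atTop (nhds 0) := by
  have hden : 0 < |deriv f up - σ| := abs_pos.2 (sub_ne_zero.2 hfup)
  have hκ : 0 ≤ κp := by
    rw [hκp]
    positivity
  have F := frontBounds hf hg hub hubbd hub' hnc hprof hlm hlp hgum hgup hg'up hfum hfup hκp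
  have hub2 := contDiff_two_of_smooth hub
  have hdub : Differentiable ℝ ub := hub2.differentiable (by norm_num)
  have hfum' : deriv f um < σ := by
    obtain ⟨c0, hc0, c1, -, hsp⟩ := F.speed
    have hc : Continuous (deriv f) := (contDiff_one_deriv (contDiff_two_of_smooth hf)).continuous
    have := le_of_tendsto (hc.continuousAt.tendsto.comp hlm)
      (Eventually.of_forall fun x => show deriv f (ub x) ≤ σ - c0 by linarith [(hsp x).1])
    linarith
  obtain ⟨M, hM, hup⟩ := F.upper
  obtain ⟨R, δ1, hδ1, C1, hC1, l, hl, d0, hd0, d1, hleft⟩ :=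
    left_region hf hg hlm F.left hgum hg'um hfum'
  obtain ⟨δ2, hδ2, C2, hC2, c0, hc0, c1, hright⟩ :=
    right_region (g := g) hf hub hub' hprof F hκ R
  refine ⟨min δ1 δ2, lt_min hδ1 hδ2, ?_⟩
  intro u0 hu0 hb hb' hE h0 h0' u hu
  have hdu0 : Differentiable ℝ u0 := hu0.differentiable (by norm_num)
  obtain ⟨N, hN0, hN⟩ := datum_bounds hb.1 hb'.1 hE h0 h0'
  have hw' : ∀ x, deriv (fun y => u0 y - ub y) x = deriv u0 x - deriv ub x := fun x =>
    deriv_fun_sub (hdu0 x) (hdub x)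
  simp only [hw'] at hN
  rw [Metric.tendsto_nhds]
  intro ε2 hε2
  obtain ⟨ε, hε, hεε⟩ : ∃ ε, 0 < ε ∧ ε < ε2 := ⟨ε2 / 2, half_pos hε2, half_lt_self hε2⟩
  obtain ⟨K, hK⟩ : ∃ K, ∀ a ≥ K, 2 * (M * Real.exp κp) * (C2 * N a) ≤ ε := by
    have : Tendsto (fun a => 2 * (M * Real.exp κp) * (C2 * N a)) atTop (nhds 0) := by
      simpa using (hN0.const_mul C2).const_mul (2 * (M * Real.exp κp))
    obtain ⟨K, hK⟩ := eventually_atTop.1 (this.eventually (gt_mem_nhds hε))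
    exact ⟨K, fun a ha => (hK a ha).le⟩
  obtain ⟨B, hB⟩ : ∃ B, ∀ x ≤ B, |ub x - um| < ε / 4 ∧ |deriv ub x| < ε / 4 := by
    have e1 := hlm.eventually (Metric.ball_mem_nhds um (show 0 < ε / 4 by positivity))
    have e2 := F.left.eventually (Metric.ball_mem_nhds 0 (show 0 < ε / 4 by positivity))
    obtain ⟨B, hB⟩ := eventually_atBot.1 (e1.and e2)
    exact ⟨B, fun x hx => by simpa [Real.dist_eq] using hB x hx⟩
  have hlin : ∀ {c : ℝ}, 0 < c → ∀ b : ℝ, ∀ᶠ t in atTop, b ≤ c * t := fun hc b =>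
    (tendsto_id.const_mul_atTop hc).eventually_ge_atTop b
  have hexp : ∀ᶠ t in atTop, C1 * Real.exp (-(l * t)) < ε / 4 := by
    have : Tendsto (fun t => C1 * Real.exp (-(l * t))) atTop (nhds 0) := by
      simpa using (Real.tendsto_exp_neg_atTop_nhds_zero.comp
        (tendsto_id.const_mul_atTop hl)).const_mul C1
    exact this.eventually (gt_mem_nhds (by positivity))
  filter_upwards [eventually_ge_atTop 0, hexp, hlin hc0 (K + 1 - min B 0),
    hlin hd0 (-R - min B 0)] with t ht hexp ht1 ht2
  set V : ℝ → ℝ := fun X => u t (X + σ * t) with hV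
  have hVd : Differentiable ℝ V := fun X =>
    ((hu.hasDerivAt_space ht (X + σ * t)).comp_add_const X (σ * t)).differentiableAt
  have hf2 := contDiff_two_of_smooth hf
  have hg1 : ContDiff ℝ 1 g := (contDiff_two_of_smooth hg).of_le (by norm_num)
  -- the position at time `t` of the characteristic issued from `b`; it is unique, and its
  -- existence is part of the analysis in each region
  set p : ℝ → ℝ := fun b => Classical.epsilon fun X => ∃ U, IsChar f g σ t b (u0 b) X U with hp
  have hchar : ∀ b X U, IsChar f g σ t b (u0 b) X U → X = p b ∧ V X = U := by
    intro b X U h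
    refine ⟨?_, hu.eq_of_isChar hf2 hg1 ht h⟩
    obtain ⟨U', h'⟩ := Classical.epsilon_spec (p := fun X => ∃ U, IsChar f g σ t b (u0 b) X U)
      ⟨X, U, h⟩
    exact (h.unique hg1 ht h').1
  have hΩ1 : ∀ x, Real.exp (-(κp * max x 0)) ≤ 1 := fun x => by
    rw [Real.exp_le_one_iff]
    have : 0 ≤ κp * max x 0 := mul_nonneg hκ (le_max_right _ _)
    linarith
  have hwδ : ∀ a {r : ℝ}, r ≤ N a * Real.exp (-(κp * max a 0)) → r ≤ δ1 := fun a {r} hr => by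
    have h1 := mul_le_mul_of_nonneg_right ((hN a).1.trans (min_le_left _ _))
      (Real.exp_pos (-(κp * max a 0))).le
    have h2 := mul_le_mul_of_nonneg_left (hΩ1 a) hδ1.le
    linarith
  have hR := fun (a : ℝ) (ha : -R ≤ a) => hright u0 a (N a) t p V hu0 ha
    ((hN a).1.trans (min_le_right _ _)) (hN a).2.1 (hN a).2.2 ht hVd hchar
  have hL := fun (a : ℝ) (ha : a ≤ -R) => hleft u0 a t p V hu0 ha
    (hwδ a (hN a).2.1) (hwδ a (hN a).2.2) ht hVd hchar
  have hpc : Continuous p := continuous_iff_continuousAt.2 fun a =>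
    (le_total a (-R)).elim (fun h => (hL a h).1) fun h => (hR a h).1
  have hps : Surjective p := by
    refine surjective_of_dist_le hpc (K := max c1 d1 * t) fun a => ?_
    have m1 := mul_le_mul_of_nonneg_right (le_max_left c1 d1) ht
    have m2 := mul_le_mul_of_nonneg_right (le_max_right c1 d1) ht
    have q1 := mul_nonneg hc0.le ht
    have q2 := mul_nonneg hd0.le ht
    rw [abs_le]
    rcases le_total a (-R) with h | h
    · have := hL a h
      constructor <;> linarith [this.2.1, this.2.2.1]
    · have := hR a h
      constructor <;> linarith [this.2.1, this.2.2.1]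
  -- far to the left both the solution and the front are close to `um`
  have hfar : ∀ x ≤ min B 0, |V x - um| ≤ ε / 4 → |deriv V x| ≤ ε / 2 →
      max |V x - ub x| |deriv V x - deriv ub x| / Real.exp (-(κp * max x 0)) ≤ ε := by
    intro x hx h1 h2
    obtain ⟨h3, h4⟩ := hB x (hx.trans (min_le_left _ _))
    rw [max_eq_right (hx.trans (min_le_right _ _)), mul_zero, neg_zero, Real.exp_zero, div_one]
    apply max_le
    · have := abs_sub_le (V x) um (ub x)
      rw [abs_sub_comm um] at this
      linarith
    · have := abs_sub (deriv V x) (deriv ub x)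
      linarith
  have key : ∀ x, max |V x - ub x| |deriv V x - deriv ub x| / Real.exp (-(κp * max x 0)) ≤ ε := by
    intro x
    obtain ⟨a, rfl⟩ := hps x
    rcases le_total a (-R) with h | h
    · obtain ⟨-, -, b1, b2, b3⟩ := hL a h
      exact hfar _ (by linarith) (by linarith) (by linarith)
    · obtain ⟨-, -, b1, s, s1, s2, s3, s4, s5⟩ := hR a h
      rcases le_total K a with h' | h'
      · exact (shift_estimate hub hκ hM.le hup s2 s1 s4 s5).trans (hK a h')
      · have hs := abs_le.1 s2
        obtain ⟨z1, z2⟩ := hB (p a + s) (by linarith [min_le_left B 0])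
        refine hfar _ (by linarith) (by rw [s4]; exact z1.le) ?_
        have := abs_sub_abs_le_abs_sub (deriv V (p a)) (deriv ub (p a + s))
        have := mul_le_mul_of_nonneg_left s3 (abs_nonneg (deriv ub (p a + s)))
        linarith
  have hle : wNorm κp (fun x => u t (x + σ * t) - ub x) ≤ ε := by
    refine ciSup_le fun x => ?_
    have : deriv (fun x => u t (x + σ * t) - ub x) x = deriv V x - deriv ub x :=
      deriv_fun_sub (hVd x) (hdub x)
    rw [this]
    exact key x
  have hnn : 0 ≤ wNorm κp (fun x => u t (x + σ * t) - ub x) :=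
    Real.iSup_nonneg fun x => by positivity
  rw [Real.dist_eq, sub_zero, abs_of_nonneg hnn]
  linarith
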